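/- arXiv:2010.15073 — 4 statements merged into one kernel-verified Lean document; each statement's English description precedes it below -/
import Mathlib

section
/- Fix d ∈ ℕ, d ≥ 1, and η > 0. There exists a constant Δ = Δ(η) > 0 with the following property. Let D = [0,1]^d, A = [0,1]^(d−1) × [0, 1/2], B = [0,1]^(d−1) × [1/2, 1], and let α, β ≥ 0 with α + β = 1 and η ≤ α ≤ 1 − η. Then there exists a Lipschitz homeomorphism Φ : [0,1]^d → [0,1]^d such that: (i) Φ restricted to the boundary ∂[0,1]^d is the identity; (ii) for Lebesgue-almost every x ∈ [0,1]^d, the Jacobian determinant of Φ at x equals 2α if x ∈ A and 2β if x ∈ B; (iii) Lip(Φ − id) ≤ Δ·|1 − 2α|, where Lip denotes the Lipschitz constant with respect to the Euclidean metric. -/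
open MeasureTheory

/-- Euclidean distance on `ℝ^d` (realised as `Fin d → ℝ`). -/
noncomputable def eudist {d : ℕ} (x y : Fin d → ℝ) : ℝ :=
  Real.sqrt (∑ i, (x i - y i) ^ 2)

/-- The unit cube `[0,1]^d`. -/
def unitCube (d : ℕ) : Set (Fin d → ℝ) := {x | ∀ i, 0 ≤ x i ∧ x i ≤ 1}

/-!
Translate each point `y` in a unit direction `e` by `c * ∫ t in -1..1, h (y + t • e)`, where `h` is
a bump supported in the unit ball. Along `e` this has derivative `c * (h (y + e) - h (y - e))`, so
the Jacobian is `1 + c * h (y + e)` on the unit ball about `-e` and `1 - c * h (y - e)` on the one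
about `e`: volume flows from one ball to the other. When `h` is radial, precomposing with a radial
map of each ball flattens these densities to the constants `1 + ε` and `1 - ε`. With
`h y = 1 - ‖y‖ ^ m` on the ball, the radial maps are explicit, and taking `m ≥ d / η` keeps them
uniformly bi-Lipschitz for all `|ε| ≤ 1 - 2 * η`. Every map involved differs from the identity by
`O(|ε|)` in Lipschitz norm, and the composite fixes each point whose translates `y + t • e`,
`|t| ≤ 1`, all avoid the open unit ball.

None of this depends on the norm. For the sup norm, with `e` a coordinate vector, a diagonal affine
map carries the two halves of the cube to the two balls, and points outside the open cube to points
that are fixed.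
-/

open Module Metric Filter Topology
open scoped NNReal

section Jacobian

variable {E : Type*} [NormedAddCommGroup E] [NormedSpace ℝ E]

/-- `f` is Fréchet differentiable at `x` with Jacobian determinant `J`. -/
def HasJacobianAt (f : E → E) (J : ℝ) (x : E) : Prop :=
  ∃ D : E →L[ℝ] E, HasFDerivAt f D x ∧ D.det = J

namespace HasJacobianAt

variable {f g : E → E} {J J' : ℝ} {x : E}

theorem congr_of_eventuallyEq (hf : HasJacobianAt f J x) (hgf : g =ᶠ[𝓝 x] f) :
    HasJacobianAt g J x := by
  obtain ⟨D, hD, hdet⟩ := hf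
  exact ⟨D, hD.congr_of_eventuallyEq hgf, hdet⟩

theorem comp (hf : HasJacobianAt f J (g x)) (hg : HasJacobianAt g J' x) :
    HasJacobianAt (f ∘ g) (J * J') x := by
  obtain ⟨Df, hDf, rfl⟩ := hf
  obtain ⟨Dg, hDg, rfl⟩ := hg
  exact ⟨Df.comp Dg, hDf.comp x hDg, LinearMap.det_comp _ _⟩

theorem symm [FiniteDimensional ℝ E] {σ : Equiv.Perm E}
    (hσ : HasJacobianAt σ J (σ.symm x)) (hJ : J ≠ 0) (hcont : ContinuousAt σ.symm x) :
    HasJacobianAt σ.symm J⁻¹ x := by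
  obtain ⟨D, hD, rfl⟩ := hσ
  have hcoe := D.coe_toContinuousLinearEquivOfDetNeZero hJ
  refine ⟨(D.toContinuousLinearEquivOfDetNeZero hJ).symm, ?_, ?_⟩
  · exact HasFDerivAt.of_local_left_inverse hcont (by rwa [hcoe])
      (Eventually.of_forall σ.apply_symm_apply)
  · rw [ContinuousLinearEquiv.det_coe_symm, hcoe]

theorem conj_comp_sub {L : E ≃L[ℝ] E} {a : E} (hf : HasJacobianAt f J (L (x - a))) :
    HasJacobianAt (fun y ↦ L.symm (f (L (y - a))) + a) J x := by
  obtain ⟨D, hD, rfl⟩ := hf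
  have hsub : HasFDerivAt (fun y : E ↦ L (y - a)) (L : E →L[ℝ] E) x :=
    L.hasFDerivAt.comp x ((hasFDerivAt_id x).sub_const a)
  refine ⟨(L.symm : E →L[ℝ] E).comp (D.comp (L : E →L[ℝ] E)), ?_, ?_⟩
  · exact (L.symm.hasFDerivAt.comp x (hD.comp x hsub)).add_const a
  · exact LinearMap.det_conj (D : E →ₗ[ℝ] E) L.symm.toLinearEquiv

end HasJacobianAt

variable [FiniteDimensional ℝ E]

theorem det_smul_id_add_smulRight {a : ℝ} (ha : a ≠ 0) (f : E →L[ℝ] ℝ) (v : E) :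
    (a • ContinuousLinearMap.id ℝ E + f.smulRight v).det =
      a ^ finrank ℝ E * (1 + a⁻¹ * f v) := by
  have htransvection :
      ((a • ContinuousLinearMap.id ℝ E + f.smulRight v : E →L[ℝ] E) : E →ₗ[ℝ] E) =
        a • LinearMap.transvection (a⁻¹ • (f : E →ₗ[ℝ] ℝ)) v := by
    ext x
    simp [LinearMap.transvection, smul_smul, ha]
  rw [ContinuousLinearMap.det, htransvection, LinearMap.det_smul, LinearMap.transvection.det]
  simp

theorem hasJacobianAt_id_add_smul {φ : E → ℝ} {φ' : E →L[ℝ] ℝ} {x : E}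
    (hφ : HasFDerivAt φ φ' x) (e : E) :
    HasJacobianAt (fun y ↦ y + φ y • e) (1 + φ' e) x := by
  refine ⟨(1 : ℝ) • ContinuousLinearMap.id ℝ E + φ'.smulRight e, ?_, ?_⟩
  · rw [one_smul]
    exact (hasFDerivAt_id x).add (hφ.smul_const e)
  · rw [det_smul_id_add_smulRight one_ne_zero, one_pow, inv_one, one_mul, one_mul]

theorem hasJacobianAt_norm_smul {lam : ℝ → ℝ} {lam' : ℝ} {y : E} (hlam : HasDerivAt lam lam' ‖y‖)
    (hne : lam ‖y‖ ≠ 0) (hnorm : DifferentiableAt ℝ (fun x : E ↦ ‖x‖) y) :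
    HasJacobianAt (fun x ↦ lam ‖x‖ • x)
      (lam ‖y‖ ^ finrank ℝ E * (1 + lam' * ‖y‖ / lam ‖y‖)) y := by
  refine ⟨_, (hlam.comp_hasFDerivAt y hnorm.hasFDerivAt).smul (hasFDerivAt_id y), ?_⟩
  rw [Function.comp_apply, det_smul_id_add_smulRight hne, _root_.smul_apply,
    hnorm.fderiv_norm_self, smul_eq_mul, inv_mul_eq_div]

end Jacobian

section LipschitzPerturbation

variable {E : Type*} [NormedAddCommGroup E] {K L M : ℝ≥0} {f g : E → E}

theorem lipschitzWith_of_sub_id (hf : LipschitzWith K fun x ↦ f x - x) :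
    LipschitzWith (K + 1) f := by
  simpa only [sub_add_cancel, id] using hf.add LipschitzWith.id

theorem lipschitzWith_comp_sub_id (hf : LipschitzWith K fun x ↦ f x - x)
    (hg : LipschitzWith L fun x ↦ g x - x) :
    LipschitzWith (K * (L + 1) + L) fun x ↦ f (g x) - x := by
  simpa only [Function.comp_apply, sub_add_sub_cancel] using
    (hf.comp (lipschitzWith_of_sub_id hg)).add hg

theorem lipschitzWith_comp_symm_sub_id {σ : Equiv.Perm E} (hf : LipschitzWith K fun x ↦ f x - x)
    (hσ : LipschitzWith L fun x ↦ σ x - x) (hσM : AntilipschitzWith M σ) :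
    LipschitzWith ((K + L) * M) fun x ↦ f (σ.symm x) - x := by
  have hsymm : LipschitzWith M σ.symm := hσM.to_rightInverse σ.apply_symm_apply
  simpa [Function.comp_def] using (hf.sub hσ).comp hsymm

end LipschitzPerturbation

section AlmostEverywhere

variable {E : Type*} [NormedAddCommGroup E] [NormedSpace ℝ E] [FiniteDimensional ℝ E]
  [MeasurableSpace E] [BorelSpace E] {μ : Measure E} [μ.IsAddHaarMeasure]

theorem addHaar_image_eq_zero_of_lipschitzWith {K : ℝ≥0} {f : E → E} (hf : LipschitzWith K f)
    {s : Set E} (hs : μ s = 0) : μ (f '' s) = 0 := by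
  have hHausdorff : μH[finrank ℝ E] (f '' s) = 0 := by
    refine le_antisymm ((hf.hausdorffMeasure_image_le (Nat.cast_nonneg _) s).trans_eq ?_) zero_le
    rw [Measure.absolutelyContinuous_isAddHaarMeasure μH[finrank ℝ E] μ hs, mul_zero]
  exact Measure.absolutelyContinuous_isAddHaarMeasure μ μH[finrank ℝ E] hHausdorff

theorem ae_comp_of_lipschitzWith_symm {K : ℝ≥0} {σ : Equiv.Perm E} (hσ : LipschitzWith K σ.symm)
    {P : E → Prop} (hP : ∀ᵐ y ∂μ, P y) : ∀ᵐ x ∂μ, P (σ x) := by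
  have himage : μ (σ.symm '' {y | ¬ P y}) = 0 := addHaar_image_eq_zero_of_lipschitzWith hσ hP
  rwa [Equiv.image_symm_eq_preimage] at himage

end AlmostEverywhere

section Shear

variable {E : Type*} [NormedAddCommGroup E] [NormedSpace ℝ E] {h : E → ℝ} {e y : E} {c : ℝ}

/-- The integral of `h` along the segment from `y - e` to `y + e`, parametrised by `[-1, 1]`. -/
noncomputable def segmentIntegral (h : E → ℝ) (e y : E) : ℝ :=
  ∫ t in (-1 : ℝ)..1, h (y + t • e)

theorem segmentIntegral_eq_zero (hzero : ∀ t ∈ Set.Icc (-1 : ℝ) 1, h (y + t • e) = 0) :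
    segmentIntegral h e y = 0 := by
  rw [segmentIntegral, intervalIntegral.integral_congr (g := fun _ ↦ 0),
    intervalIntegral.integral_zero]
  rwa [Set.uIcc_of_le (by norm_num)]

theorem abs_segmentIntegral_le (hh : ∀ x, h x ∈ Set.Icc (0 : ℝ) 1) :
    |segmentIntegral h e y| ≤ 2 := by
  have hbound : ∀ t ∈ Set.uIoc (-1 : ℝ) 1, ‖h (y + t • e)‖ ≤ 1 := fun t _ ↦ by
    rw [Real.norm_of_nonneg (hh _).1]
    exact (hh _).2
  refine (intervalIntegral.norm_integral_le_of_norm_le_const hbound).trans_eq ?_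
  norm_num

theorem lipschitzWith_segmentIntegral {K : ℝ≥0} (hh : LipschitzWith K h) :
    LipschitzWith (2 * K) (segmentIntegral h e) := by
  have hint (x : E) : IntervalIntegrable (fun t : ℝ ↦ h (x + t • e)) volume (-1) 1 :=
    (hh.continuous.comp (by fun_prop)).intervalIntegrable _ _
  refine LipschitzWith.of_dist_le_mul fun x y ↦ ?_
  have hbound : ∀ t ∈ Set.uIoc (-1 : ℝ) 1, ‖h (x + t • e) - h (y + t • e)‖ ≤ K * dist x y :=
    fun t _ ↦ by
      simpa only [← dist_eq_norm, dist_add_right] using hh.dist_le_mul (x + t • e) (y + t • e)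
  rw [dist_eq_norm, segmentIntegral, segmentIntegral,
    ← intervalIntegral.integral_sub (hint x) (hint y)]
  refine (intervalIntegral.norm_integral_le_of_norm_le_const hbound).trans_eq ?_
  norm_num
  ring

theorem segmentIntegral_add_smul (h : E → ℝ) (e y : E) (τ : ℝ) :
    segmentIntegral h e (y + τ • e) = ∫ t in (τ - 1)..(τ + 1), h (y + t • e) := by
  have hshift (t : ℝ) : y + τ • e + t • e = y + (t + τ) • e := by module
  simp only [segmentIntegral, hshift]
  rw [intervalIntegral.integral_comp_add_right (fun t ↦ h (y + t • e)), neg_add_eq_sub,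
    add_comm]

theorem hasDerivAt_segmentIntegral_add_smul (hh : Continuous h) (e y : E) (τ : ℝ) :
    HasDerivAt (fun τ : ℝ ↦ segmentIntegral h e (y + τ • e))
      (h (y + (τ + 1) • e) - h (y + (τ - 1) • e)) τ := by
  have hline : Continuous fun t : ℝ ↦ h (y + t • e) := hh.comp (by fun_prop)
  have hprimitive (a : ℝ) : HasDerivAt (fun u ↦ ∫ t in (0 : ℝ)..u, h (y + t • e))
      (h (y + a • e)) a := (hline.integral_hasStrictDerivAt 0 a).hasDerivAt
  have hdiff := ((hprimitive (τ + 1)).comp_add_const τ 1).sub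
    ((hprimitive (τ - 1)).comp_sub_const τ 1)
  refine hdiff.congr_of_eventuallyEq (Eventually.of_forall fun u ↦ ?_)
  exact (segmentIntegral_add_smul h e y u).trans (intervalIntegral.integral_interval_sub_left
    (hline.intervalIntegrable _ _) (hline.intervalIntegrable _ _)).symm

/-- Translation of each point `y` in the direction `e` by `c` times the integral of `h` along the
segment from `y - e` to `y + e`. -/
noncomputable def shear (h : E → ℝ) (e : E) (c : ℝ) (y : E) : E :=
  y + (c * segmentIntegral h e y) • e

theorem shear_eq_self (hzero : ∀ t ∈ Set.Icc (-1 : ℝ) 1, h (y + t • e) = 0) :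
    shear h e c y = y := by
  rw [shear, segmentIntegral_eq_zero hzero, mul_zero, zero_smul, add_zero]

theorem lipschitzWith_shear_sub_id {K : ℝ≥0} (hh : LipschitzWith K h) (he : ‖e‖ = 1) (c : ℝ) :
    LipschitzWith (‖c‖₊ * (2 * K)) fun y ↦ shear h e c y - y := by
  refine LipschitzWith.of_dist_le_mul fun x y ↦ ?_
  have hφ := (lipschitzWith_segmentIntegral (e := e) hh).dist_le_mul x y
  simp only [shear, add_sub_cancel_left, dist_eq_norm, ← sub_smul, ← mul_sub, norm_smul, he,
    mul_one, norm_mul, NNReal.coe_mul, coe_nnnorm] at hφ ⊢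
  rw [mul_assoc]
  gcongr

theorem strictMono_add_mul_segmentIntegral (hh : ∀ x, h x ∈ Set.Icc (0 : ℝ) 1)
    (hcont : Continuous h) (hc : |c| < 1) (e y : E) :
    StrictMono fun τ : ℝ ↦ τ + c * segmentIntegral h e (y + τ • e) := by
  refine strictMono_of_hasDerivAt_pos (fun τ ↦ (hasDerivAt_id τ).add
    ((hasDerivAt_segmentIntegral_add_smul hcont e y τ).const_mul c)) fun τ ↦ ?_
  have hosc : |h (y + (τ + 1) • e) - h (y + (τ - 1) • e)| ≤ 1 :=
    abs_sub_le_of_nonneg_of_le (hh _).1 (hh _).2 (hh _).1 (hh _).2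
  have hlt : |c * (h (y + (τ + 1) • e) - h (y + (τ - 1) • e))| < 1 := by
    rw [abs_mul]
    exact (mul_le_of_le_one_right (abs_nonneg c) hosc).trans_lt hc
  linarith [(abs_lt.1 hlt).1]

theorem surjective_add_mul_segmentIntegral (hh : ∀ x, h x ∈ Set.Icc (0 : ℝ) 1)
    (hcont : Continuous h) (c : ℝ) (e y : E) :
    Function.Surjective fun τ : ℝ ↦ τ + c * segmentIntegral h e (y + τ • e) := by
  have hbound (τ : ℝ) : |c * segmentIntegral h e (y + τ • e)| ≤ |c| * 2 := by
    rw [abs_mul]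
    exact mul_le_mul_of_nonneg_left (abs_segmentIntegral_le hh) (abs_nonneg c)
  refine Continuous.surjective (continuous_id.add (continuous_iff_continuousAt.2 fun τ ↦
    ((hasDerivAt_segmentIntegral_add_smul hcont e y τ).const_mul c).continuousAt)) ?_ ?_
  · exact tendsto_atTop_add_right_of_le _ _ tendsto_id fun τ ↦ (abs_le.1 (hbound τ)).1
  · exact tendsto_atBot_add_right_of_ge _ _ tendsto_id fun τ ↦ (abs_le.1 (hbound τ)).2

theorem shear_bijective (hh : ∀ x, h x ∈ Set.Icc (0 : ℝ) 1) (hcont : Continuous h)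
    (hc : |c| < 1) (e : E) : Function.Bijective (shear h e c) := by
  constructor
  · intro x y hxy
    obtain ⟨τ, hτ⟩ : ∃ τ, τ = c * segmentIntegral h e y - c * segmentIntegral h e x := ⟨_, rfl⟩
    have hx : x = y + τ • e := by
      rw [hτ, sub_smul, add_sub_assoc', eq_sub_iff_add_eq]
      exact hxy
    have hτ0 : τ = 0 := (strictMono_add_mul_segmentIntegral hh hcont hc e y).injective <| by
      simp only [← hx, zero_smul, add_zero, zero_add]
      linarith
    rw [hx, hτ0, zero_smul, add_zero]
  · intro z
    obtain ⟨τ, hτ⟩ := surjective_add_mul_segmentIntegral hh hcont c e z 0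
    refine ⟨z + τ • e, ?_⟩
    rw [shear, add_assoc, ← add_smul, show τ + _ = 0 from hτ, zero_smul, add_zero]

theorem ae_hasJacobianAt_shear [FiniteDimensional ℝ E] [MeasurableSpace E] [BorelSpace E]
    {μ : Measure E} [μ.IsAddHaarMeasure] {K : ℝ≥0} (hh : LipschitzWith K h) (e : E) (c : ℝ) :
    ∀ᵐ y ∂μ, HasJacobianAt (shear h e c) (1 + c * (h (y + e) - h (y - e))) y := by
  filter_upwards [(lipschitzWith_segmentIntegral (e := e) hh).ae_differentiableAt] with y hy
  have hline := hasDerivAt_segmentIntegral_add_smul hh.continuous e y 0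
  have hdir : fderiv ℝ (segmentIntegral h e) y e = h (y + e) - h (y - e) := by
    rw [← hy.lineDeriv_eq_fderiv, lineDeriv, hline.deriv]
    simp [sub_eq_add_neg]
  rw [← hdir]
  exact hasJacobianAt_id_add_smul (hy.hasFDerivAt.const_mul c) e

end Shear

section RadialMap

/-- `lam` is a profile of scaling factors for radial maps `y ↦ lam ‖y‖ • y`: it is `K`-Lipschitz,
equal to `1` outside the unit interval, and `r ↦ lam r * r` has slope at least `c > 0`. Only the
values on `[0, ∞)` matter. -/
structure IsRadialProfile (K c : ℝ≥0) (lam : ℝ → ℝ) : Prop where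
  pos : 0 < c
  eq_one : ∀ r, 1 ≤ r → lam r = 1
  lipschitzOnWith : LipschitzOnWith K lam (Set.Ici 0)
  monotoneOn : MonotoneOn (fun r ↦ lam r * r - c * r) (Set.Ici 0)

/-- The radial map about `a` that multiplies vectors of length `r` by `lam r`. -/
noncomputable def radialMap {E : Type*} [NormedAddCommGroup E] [NormedSpace ℝ E] (lam : ℝ → ℝ)
    (a y : E) : E :=
  a + lam ‖y - a‖ • (y - a)

namespace IsRadialProfile

variable {E : Type*} [NormedAddCommGroup E] [NormedSpace ℝ E] {K c : ℝ≥0} {lam : ℝ → ℝ}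

theorem le_of_pos (hlam : IsRadialProfile K c lam) {r : ℝ} (hr : 0 < r) : c ≤ lam r := by
  have hmono := hlam.monotoneOn Set.self_mem_Ici hr.le hr.le
  exact le_of_mul_le_mul_right (by simpa using hmono) hr

theorem norm_smul_self (hlam : IsRadialProfile K c lam) (u : E) :
    ‖lam ‖u‖ • u‖ = lam ‖u‖ * ‖u‖ := by
  rcases eq_or_ne u 0 with rfl | hu
  · simp
  · rw [norm_smul, Real.norm_of_nonneg (c.coe_nonneg.trans (hlam.le_of_pos (norm_pos_iff.2 hu)))]

theorem abs_sub_mul_le (hlam : IsRadialProfile K c lam) {r s : ℝ} (hs : 0 ≤ s) (hsr : s ≤ r) :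
    |lam r - lam s| * s ≤ K * (r - s) := by
  have hnonneg : 0 ≤ r - s := sub_nonneg.2 hsr
  rcases le_total 1 s with hs1 | hs1
  · rw [hlam.eq_one s hs1, hlam.eq_one r (hs1.trans hsr), sub_self, abs_zero, zero_mul]
    positivity
  · have hdist := hlam.lipschitzOnWith.dist_le_mul r (hs.trans hsr) s hs
    rw [Real.dist_eq, Real.dist_eq, abs_of_nonneg hnonneg] at hdist
    exact (mul_le_of_le_one_right (abs_nonneg _) hs1).trans hdist

theorem abs_sub_one_le (hlam : IsRadialProfile K c lam) {r : ℝ} (hr : 0 ≤ r) :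
    |lam r - 1| ≤ K := by
  rcases le_total 1 r with h1 | h1
  · simp [hlam.eq_one r h1]
  · have hdist := hlam.lipschitzOnWith.dist_le_mul r hr 1 (Set.mem_Ici.2 zero_le_one)
    rw [hlam.eq_one 1 le_rfl, Real.dist_eq, Real.dist_eq, abs_sub_comm r,
      abs_of_nonneg (sub_nonneg.2 h1)] at hdist
    exact hdist.trans (mul_le_of_le_one_right K.coe_nonneg (by linarith))

theorem norm_sub_one_smul_sub_le (hlam : IsRadialProfile K c lam) (u v : E) :
    ‖(lam ‖u‖ - 1) • u - (lam ‖v‖ - 1) • v‖ ≤ 2 * K * ‖u - v‖ := by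
  wlog hvu : ‖v‖ ≤ ‖u‖ generalizing u v
  · rw [norm_sub_rev, norm_sub_rev u]
    exact this v u (le_of_not_ge hvu)
  have hsplit : (lam ‖u‖ - 1) • u - (lam ‖v‖ - 1) • v =
      (lam ‖u‖ - lam ‖v‖) • v + (lam ‖u‖ - 1) • (u - v) := by module
  calc ‖(lam ‖u‖ - 1) • u - (lam ‖v‖ - 1) • v‖
      ≤ |lam ‖u‖ - lam ‖v‖| * ‖v‖ + |lam ‖u‖ - 1| * ‖u - v‖ := by
        rw [hsplit]
        simpa only [norm_smul, Real.norm_eq_abs] using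
          norm_add_le ((lam ‖u‖ - lam ‖v‖) • v) ((lam ‖u‖ - 1) • (u - v))
    _ ≤ K * (‖u‖ - ‖v‖) + K * ‖u - v‖ :=
        add_le_add (hlam.abs_sub_mul_le (norm_nonneg v) hvu)
          (mul_le_mul_of_nonneg_right (hlam.abs_sub_one_le (norm_nonneg u)) (norm_nonneg _))
    _ ≤ K * ‖u - v‖ + K * ‖u - v‖ := by
        gcongr
        exact norm_sub_norm_le u v
    _ = 2 * K * ‖u - v‖ := by ring

theorem mul_norm_sub_norm_le (hlam : IsRadialProfile K c lam) {u v : E} (hvu : ‖v‖ ≤ ‖u‖) :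
    c * (‖u‖ - ‖v‖) ≤ ‖lam ‖u‖ • u - lam ‖v‖ • v‖ := by
  have hmono := hlam.monotoneOn (norm_nonneg v) (norm_nonneg u) hvu
  calc c * (‖u‖ - ‖v‖) ≤ lam ‖u‖ * ‖u‖ - lam ‖v‖ * ‖v‖ := by linarith
    _ = ‖lam ‖u‖ • u‖ - ‖lam ‖v‖ • v‖ := by rw [hlam.norm_smul_self, hlam.norm_smul_self]
    _ ≤ ‖lam ‖u‖ • u - lam ‖v‖ • v‖ := norm_sub_norm_le _ _

theorem norm_sub_le (hlam : IsRadialProfile K c lam) (u v : E) :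
    ‖u - v‖ ≤ ((1 + K / c) / c : ℝ≥0) * ‖lam ‖u‖ • u - lam ‖v‖ • v‖ := by
  wlog hvu : ‖v‖ ≤ ‖u‖ generalizing u v
  · rw [norm_sub_rev, norm_sub_rev (lam ‖u‖ • u)]
    exact this v u (le_of_not_ge hvu)
  rcases (norm_nonneg u).eq_or_lt with hu | hu
  · have hv : v = 0 := norm_le_zero_iff.1 (hvu.trans_eq hu.symm)
    simp [norm_eq_zero.1 hu.symm, hv]
  have hc : (0 : ℝ) < c := hlam.pos
  set δ := ‖lam ‖u‖ • u - lam ‖v‖ • v‖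
  have hradial : ‖u‖ - ‖v‖ ≤ δ / c := by
    rw [le_div_iff₀' hc]
    exact hlam.mul_norm_sub_norm_le hvu
  have hmul : c * ‖u - v‖ ≤ δ + K * (δ / c) := calc
    c * ‖u - v‖ ≤ lam ‖u‖ * ‖u - v‖ := by gcongr; exact hlam.le_of_pos hu
    _ = ‖(lam ‖u‖ • u - lam ‖v‖ • v) - (lam ‖u‖ - lam ‖v‖) • v‖ := by
      rw [← norm_smul_of_nonneg (hc.le.trans (hlam.le_of_pos hu))]
      congr 1
      module
    _ ≤ δ + |lam ‖u‖ - lam ‖v‖| * ‖v‖ := by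
      rw [← Real.norm_eq_abs, ← norm_smul]
      exact _root_.norm_sub_le _ _
    _ ≤ δ + K * (‖u‖ - ‖v‖) := by grw [hlam.abs_sub_mul_le (norm_nonneg v) hvu]
    _ ≤ δ + K * (δ / c) := by gcongr
  push_cast
  rw [div_mul_eq_mul_div, le_div_iff₀' hc]
  exact hmul.trans_eq (by ring)

theorem exists_norm_smul_eq (hlam : IsRadialProfile K c lam) (w : E) :
    ∃ u : E, lam ‖u‖ • u = w := by
  rcases eq_or_ne w 0 with rfl | hw
  · exact ⟨0, smul_zero _⟩
  have hR : (0 : ℝ) ≤ max 1 ‖w‖ := zero_le_one.trans (le_max_left _ _)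
  have hcont : ContinuousOn (fun r ↦ lam r * r) (Set.Icc 0 (max 1 ‖w‖)) :=
    (hlam.lipschitzOnWith.continuousOn.mono Set.Icc_subset_Ici_self).mul continuousOn_id
  have hmem : ‖w‖ ∈ Set.Icc (lam 0 * 0) (lam (max 1 ‖w‖) * max 1 ‖w‖) := by
    rw [mul_zero, hlam.eq_one _ (le_max_left _ _), one_mul]
    exact ⟨norm_nonneg w, le_max_right _ _⟩
  obtain ⟨r, hr, hrw : lam r * r = ‖w‖⟩ := intermediate_value_Icc hR hcont hmem
  have hnorm : ‖(r / ‖w‖) • w‖ = r := by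
    rw [norm_smul, norm_div, norm_norm, div_mul_cancel₀ _ (norm_ne_zero_iff.2 hw),
      Real.norm_of_nonneg hr.1]
  refine ⟨(r / ‖w‖) • w, ?_⟩
  rw [hnorm, smul_smul, mul_div_assoc', hrw, div_self (norm_ne_zero_iff.2 hw), one_smul]

theorem radialMap_eq_self (hlam : IsRadialProfile K c lam) {a y : E} (hy : 1 ≤ ‖y - a‖) :
    radialMap lam a y = y := by
  rw [radialMap, hlam.eq_one _ hy, one_smul, add_sub_cancel]

theorem lipschitzWith_radialMap_sub_id (hlam : IsRadialProfile K c lam) (a : E) :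
    LipschitzWith (2 * K) fun y ↦ radialMap lam a y - y := by
  have hsub (y : E) : radialMap lam a y - y = (lam ‖y - a‖ - 1) • (y - a) := by
    rw [radialMap]
    module
  refine LipschitzWith.of_dist_le_mul fun x y ↦ ?_
  simpa [dist_eq_norm, hsub] using hlam.norm_sub_one_smul_sub_le (x - a) (y - a)

theorem antilipschitzWith_radialMap (hlam : IsRadialProfile K c lam) (a : E) :
    AntilipschitzWith ((1 + K / c) / c) (radialMap lam a) := by
  refine AntilipschitzWith.of_le_mul_dist fun x y ↦ ?_
  simpa only [radialMap, dist_eq_norm, add_sub_add_left_eq_sub, sub_sub_sub_cancel_right] using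
    hlam.norm_sub_le (x - a) (y - a)

theorem bijective_radialMap (hlam : IsRadialProfile K c lam) (a : E) :
    Function.Bijective (radialMap lam a) := by
  refine ⟨(hlam.antilipschitzWith_radialMap a).injective, fun z ↦ ?_⟩
  obtain ⟨u, hu⟩ := hlam.exists_norm_smul_eq (z - a)
  exact ⟨a + u, by rw [radialMap, add_sub_cancel_left, hu, add_sub_cancel]⟩

/-- The radial map about `a` as a permutation of the whole space. -/
noncomputable def radialPerm (hlam : IsRadialProfile K c lam) (a : E) : Equiv.Perm E :=
  Equiv.ofBijective (radialMap lam a) (hlam.bijective_radialMap a)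

theorem radialPerm_eq_self_of_notMem (hlam : IsRadialProfile K c lam) {a y : E}
    (hy : y ∉ ball a 1) : hlam.radialPerm a y = y :=
  hlam.radialMap_eq_self (by simpa [dist_eq_norm] using hy)

end IsRadialProfile

theorem hasJacobianAt_radialMap {E : Type*} [NormedAddCommGroup E] [NormedSpace ℝ E]
    [FiniteDimensional ℝ E] {lam : ℝ → ℝ} {lam' : ℝ} {a y : E}
    (hlam : HasDerivAt lam lam' ‖y - a‖) (hne : lam ‖y - a‖ ≠ 0)
    (hnorm : DifferentiableAt ℝ (fun x : E ↦ ‖x‖) (y - a)) :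
    HasJacobianAt (radialMap lam a)
      (lam ‖y - a‖ ^ finrank ℝ E * (1 + lam' * ‖y - a‖ / lam ‖y - a‖)) y := by
  have htranslate := HasJacobianAt.conj_comp_sub (L := ContinuousLinearEquiv.refl ℝ E) (a := a)
    (hasJacobianAt_norm_smul hlam hne hnorm)
  exact htranslate.congr_of_eventuallyEq (Eventually.of_forall fun x ↦ add_comm _ _)

end RadialMap

section Cutoff

/-- The cutoff `r ↦ 1 - r ^ m` on `[0, 1]`, extended by `0` to `[1, ∞)`. -/
noncomputable def cutoff (m : ℕ) (r : ℝ) : ℝ := 1 - min r 1 ^ m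

variable {m : ℕ} {r s : ℝ}

theorem cutoff_of_one_le (hr : 1 ≤ r) : cutoff m r = 0 := by
  rw [cutoff, min_eq_right hr, one_pow, sub_self]

theorem cutoff_mem_Icc (hr : 0 ≤ r) : cutoff m r ∈ Set.Icc (0 : ℝ) 1 := by
  have hmin : 0 ≤ min r 1 := le_min hr zero_le_one
  exact ⟨sub_nonneg.2 (pow_le_one₀ hmin (min_le_right _ _)),
    sub_le_self _ (pow_nonneg hmin m)⟩

theorem abs_cutoff_sub_le (hr : 0 ≤ r) (hs : 0 ≤ s) :
    |cutoff m r - cutoff m s| ≤ m * |r - s| := by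
  have habs {x : ℝ} (hx : 0 ≤ x) : |min x 1| ≤ 1 := by
    rw [abs_of_nonneg (le_min hx zero_le_one)]
    exact min_le_right _ _
  have hmin : |min s 1 - min r 1| ≤ |r - s| := by
    simpa [abs_sub_comm] using abs_min_sub_min_le_max s 1 r 1
  calc |cutoff m r - cutoff m s| = |min s 1 ^ m - min r 1 ^ m| := by
        rw [cutoff, cutoff, sub_sub_sub_cancel_left]
    _ ≤ |min s 1 - min r 1| * m * max |min s 1| |min r 1| ^ (m - 1) := abs_pow_sub_pow_le _ _ _
    _ ≤ |r - s| * m * 1 := by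
        gcongr
        exact pow_le_one₀ (le_max_of_le_left (abs_nonneg _)) (max_le (habs hs) (habs hr))
    _ = m * |r - s| := by ring

theorem lipschitzWith_cutoff_norm {E : Type*} [NormedAddCommGroup E] (m : ℕ) :
    LipschitzWith m fun y : E ↦ cutoff m ‖y‖ := by
  refine LipschitzWith.of_dist_le_mul fun x y ↦ ?_
  rw [Real.dist_eq, dist_eq_norm]
  exact (abs_cutoff_sub_le (norm_nonneg x) (norm_nonneg y)).trans
    (mul_le_mul_of_nonneg_left (abs_norm_sub_norm_le x y) (Nat.cast_nonneg m))

theorem hasDerivAt_cutoff (hr : r < 1) : HasDerivAt (cutoff m) (-(m * r ^ (m - 1))) r := by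
  refine ((hasDerivAt_pow m r).const_sub 1).congr_of_eventuallyEq ?_
  filter_upwards [eventually_lt_nhds hr] with x hx
  rw [cutoff, min_eq_left hx.le]

theorem mul_deriv_cutoff (hm : m ≠ 0) (hr : r < 1) :
    r * -(m * r ^ (m - 1)) = m * (cutoff m r - 1) := by
  rw [cutoff, min_eq_left hr.le, ← pow_sub_one_mul hm r]
  ring

end Cutoff

section RadialScale

theorem lipschitzOnWith_rpow_const {p : ℝ≥0} (hp : p ≤ 1) :
    LipschitzOnWith (2 * p) (fun x : ℝ ↦ x ^ (p : ℝ)) (Set.Ici (1 / 2)) := by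
  refine (convex_Ici (1 / 2 : ℝ)).lipschitzOnWith_of_nnnorm_hasDerivWithin_le
    (fun x hx ↦ (Real.hasDerivAt_rpow_const (Or.inl ?_)).hasDerivWithinAt) fun x hx ↦ ?_
  · exact (one_half_pos.trans_le hx).ne'
  have hx0 : (0 : ℝ) < x := one_half_pos.trans_le hx
  have hp1 : (p : ℝ) ≤ 1 := hp
  have hpow : x ^ ((p : ℝ) - 1) ≤ 2 := calc
    x ^ ((p : ℝ) - 1) ≤ (1 / 2 : ℝ) ^ ((p : ℝ) - 1) :=
      Real.rpow_le_rpow_of_nonpos one_half_pos hx (sub_nonpos.2 hp1)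
    _ ≤ (1 / 2 : ℝ) ^ (-1 : ℝ) :=
      Real.rpow_le_rpow_of_exponent_ge one_half_pos (by norm_num) (by linarith [p.coe_nonneg])
    _ = 2 := by norm_num [Real.rpow_neg_one]
  rw [← NNReal.coe_le_coe, coe_nnnorm, Real.norm_of_nonneg (by positivity)]
  push_cast
  nlinarith [p.coe_nonneg]

/-- The factor by which the radial map attached to `ε` multiplies the volume of the centred ball
of radius `r` in dimension `d`; it is chosen so as to turn the density
`1 + ε * (1 + d / m) * cutoff m r` into the constant density `1 + ε`. -/
noncomputable def volumeRatio (d m : ℕ) (ε r : ℝ) : ℝ :=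
  1 + d / m * (ε / (1 + ε)) * cutoff m r

/-- The scaling factor at radius `r` of the radial map with volume factor `volumeRatio d m ε`. -/
noncomputable def radialScale (d m : ℕ) (ε r : ℝ) : ℝ :=
  volumeRatio d m ε r ^ (d : ℝ)⁻¹

variable {d m : ℕ} {η ε r s : ℝ}

theorem ne_zero_of_le_mul (hd : d ≠ 0) (hdm : d ≤ η * m) : m ≠ 0 := by
  rintro rfl
  simp_all

theorem abs_mul_one_add_div_le (hη : 0 < η) (hdm : d ≤ η * m) (hε : |ε| ≤ 1 - 2 * η) :
    |ε * (1 + d / m)| ≤ 1 - η := by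
  have hq : (d / m : ℝ) ≤ η := div_le_of_le_mul₀ (Nat.cast_nonneg m) hη.le hdm
  rw [abs_mul, abs_of_nonneg (by positivity : (0 : ℝ) ≤ 1 + d / m)]
  calc |ε| * (1 + d / m) ≤ (1 - 2 * η) * (1 + η) := by gcongr; linarith [abs_nonneg ε]
    _ ≤ 1 - η := by nlinarith [sq_nonneg η]

theorem abs_div_one_add_le (hη : 0 < η) (hε : |ε| ≤ 1 - 2 * η) : |ε / (1 + ε)| ≤ |ε / η| / 2 := by
  have hpos : 2 * η ≤ 1 + ε := by linarith [neg_abs_le ε]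
  rw [abs_div, abs_div, abs_of_pos hη, abs_of_pos (by linarith : 0 < 1 + ε), div_div, mul_comm η]
  gcongr

theorem volumeRatio_mem_Icc (hη : 0 < η) (hdm : d ≤ η * m) (hε : |ε| ≤ 1 - 2 * η) (hr : 0 ≤ r) :
    volumeRatio d m ε r ∈ Set.Icc (1 / 2 : ℝ) (3 / 2) := by
  have hq : (d / m : ℝ) ≤ η := div_le_of_le_mul₀ (Nat.cast_nonneg m) hη.le hdm
  have hcut := cutoff_mem_Icc (m := m) hr
  have hcoef : |d / m * (ε / (1 + ε)) * cutoff m r| ≤ 1 / 2 := calc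
    |d / m * (ε / (1 + ε)) * cutoff m r| = d / m * |ε / (1 + ε)| * cutoff m r := by
      rw [abs_mul, abs_mul, abs_of_nonneg hcut.1, abs_of_nonneg (by positivity : (0 : ℝ) ≤ d / m)]
    _ ≤ η * (|ε / η| / 2) * 1 := by
      gcongr
      exacts [hcut.1, abs_div_one_add_le hη hε, hcut.2]
    _ = |ε| / 2 := by
      rw [abs_div, abs_of_pos hη]
      field_simp
    _ ≤ 1 / 2 := by linarith
  rw [abs_le] at hcoef
  constructor <;> simp only [volumeRatio] <;> linarith

theorem abs_volumeRatio_sub_le (hη : 0 < η) (hm : m ≠ 0) (hε : |ε| ≤ 1 - 2 * η) (hr : 0 ≤ r)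
    (hs : 0 ≤ s) :
    |volumeRatio d m ε r - volumeRatio d m ε s| ≤ d * (|ε / η| / 2) * |r - s| := calc
  |volumeRatio d m ε r - volumeRatio d m ε s|
      = d / m * |ε / (1 + ε)| * |cutoff m r - cutoff m s| := by
        rw [volumeRatio, volumeRatio, add_sub_add_left_eq_sub, ← mul_sub, abs_mul, abs_mul,
          abs_of_nonneg (by positivity : (0 : ℝ) ≤ d / m)]
  _ ≤ d / m * (|ε / η| / 2) * (m * |r - s|) := by
        gcongr
        exacts [abs_div_one_add_le hη hε, abs_cutoff_sub_le hr hs]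
  _ = d * (|ε / η| / 2) * |r - s| := by field_simp

theorem radialScale_of_one_le (hr : 1 ≤ r) : radialScale d m ε r = 1 := by
  rw [radialScale, volumeRatio, cutoff_of_one_le hr, mul_zero, add_zero, Real.one_rpow]

theorem lipschitzOnWith_radialScale (hd : d ≠ 0) (hη : 0 < η) (hdm : d ≤ η * m)
    (hε : |ε| ≤ 1 - 2 * η) : LipschitzOnWith ‖ε / η‖₊ (radialScale d m ε) (Set.Ici 0) := by
  have hm : m ≠ 0 := ne_zero_of_le_mul hd hdm
  have hd1 : (d : ℝ≥0)⁻¹ ≤ 1 :=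
    inv_le_one_of_one_le₀ (by exact_mod_cast Nat.one_le_iff_ne_zero.2 hd)
  refine LipschitzOnWith.of_dist_le_mul fun r hr s hs ↦ ?_
  have hroot := (lipschitzOnWith_rpow_const hd1).dist_le_mul
    _ (volumeRatio_mem_Icc hη hdm hε hr).1 _ (volumeRatio_mem_Icc hη hdm hε hs).1
  refine hroot.trans ?_
  rw [Real.dist_eq, Real.dist_eq, coe_nnnorm, Real.norm_eq_abs]
  grw [abs_volumeRatio_sub_le hη hm hε hr hs]
  push_cast
  exact le_of_eq (by field_simp)

theorem radialScale_pow (hd : d ≠ 0) (hκ : 0 ≤ volumeRatio d m ε r) :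
    radialScale d m ε r ^ d = volumeRatio d m ε r := by
  rw [radialScale, Real.rpow_inv_natCast_pow hκ hd]

theorem radialScale_mem_Ioc (hη : 0 < η) (hdm : d ≤ η * m) (hε : |ε| ≤ 1 - 2 * η) (hr : 0 ≤ r) :
    radialScale d m ε r ∈ Set.Ioc (0 : ℝ) 2 := by
  obtain ⟨hlow, hup⟩ := volumeRatio_mem_Icc hη hdm hε hr
  have hpos : 0 < volumeRatio d m ε r := one_half_pos.trans_le hlow
  refine ⟨Real.rpow_pos_of_pos hpos _, ?_⟩
  calc volumeRatio d m ε r ^ (d : ℝ)⁻¹ ≤ 2 ^ (d : ℝ)⁻¹ :=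
        Real.rpow_le_rpow hpos.le (by linarith) (by positivity)
    _ ≤ 2 ^ (1 : ℝ) := Real.rpow_le_rpow_of_exponent_le one_le_two (Nat.cast_inv_le_one d)
    _ = 2 := Real.rpow_one 2

theorem exists_hasDerivAt_radialScale (hd : d ≠ 0) (hm : m ≠ 0) (hε : 1 + ε ≠ 0) (hr : r < 1)
    (hκ : 0 < volumeRatio d m ε r) :
    ∃ lam', HasDerivAt (radialScale d m ε) lam' r ∧
      (1 + ε) * (radialScale d m ε r ^ (d - 1) * (radialScale d m ε r + lam' * r)) =
        1 + ε * (1 + d / m) * cutoff m r := by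
  set coef := (d / m : ℝ) * (ε / (1 + ε)) with hcoef
  have hκ' : HasDerivAt (volumeRatio d m ε) (coef * -(m * r ^ (m - 1))) r :=
    ((hasDerivAt_cutoff hr).const_mul coef).const_add 1
  refine ⟨_, hκ'.rpow_const (Or.inl hκ.ne'), ?_⟩
  have hpow : radialScale d m ε r ^ (d - 1) * radialScale d m ε r = volumeRatio d m ε r := by
    rw [pow_sub_one_mul hd, radialScale_pow hd hκ.le]
  have hpow' : radialScale d m ε r ^ (d - 1) * volumeRatio d m ε r ^ ((d : ℝ)⁻¹ - 1) = 1 := by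
    rw [Real.rpow_sub_one hκ.ne', mul_div_assoc', div_eq_one_iff_eq hκ.ne']
    exact hpow
  calc _ = (1 + ε) * (radialScale d m ε r ^ (d - 1) * radialScale d m ε r +
          (radialScale d m ε r ^ (d - 1) * volumeRatio d m ε r ^ ((d : ℝ)⁻¹ - 1)) *
            (coef / d * (r * -(m * r ^ (m - 1))))) := by ring
    _ = (1 + ε) * (1 + coef * cutoff m r + coef / d * (m * (cutoff m r - 1))) := by
      rw [hpow, hpow', one_mul, mul_deriv_cutoff hm hr, volumeRatio]
    _ = 1 + ε * (1 + d / m) * cutoff m r := by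
      rw [hcoef]
      field_simp
      ring

theorem le_one_add_mul_cutoff (hη : 0 < η) (hdm : d ≤ η * m) (hε : |ε| ≤ 1 - 2 * η)
    (hr : 0 ≤ r) : η ≤ 1 + ε * (1 + d / m) * cutoff m r := by
  have hcut := cutoff_mem_Icc (m := m) hr
  have hmul : |ε * (1 + d / m) * cutoff m r| ≤ 1 - η := by
    rw [abs_mul, abs_of_nonneg hcut.1]
    exact (mul_le_of_le_one_right (abs_nonneg _) hcut.2).trans (abs_mul_one_add_div_le hη hdm hε)
  linarith [neg_abs_le (ε * (1 + d / m) * cutoff m r)]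

theorem exists_hasDerivAt_radialScale_mul_self (hd : d ≠ 0) (hη : 0 < η) (hdm : d ≤ η * m)
    (hε : |ε| ≤ 1 - 2 * η) (hr0 : 0 ≤ r) (hr1 : r < 1) :
    ∃ slope, HasDerivAt (fun r ↦ radialScale d m ε r * r) slope r ∧ η / 2 ^ d ≤ slope := by
  have hm : m ≠ 0 := ne_zero_of_le_mul hd hdm
  have hε0 : 0 < 1 + ε := by linarith [neg_abs_le ε]
  obtain ⟨hlam0, hlam2⟩ := radialScale_mem_Ioc hη hdm hε hr0
  obtain ⟨lam', hlam', hslope⟩ := exists_hasDerivAt_radialScale hd hm hε0.ne' hr1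
    (one_half_pos.trans_le (volumeRatio_mem_Icc hη hdm hε hr0).1)
  refine ⟨_, hlam'.mul (hasDerivAt_id r), ?_⟩
  set slope := radialScale d m ε r + lam' * r
  have hη_le : η ≤ (1 + ε) * radialScale d m ε r ^ (d - 1) * slope := by
    rw [mul_assoc, hslope]
    exact le_one_add_mul_cutoff hη hdm hε hr0
  have hslope_pos : 0 < slope := pos_of_mul_pos_right (hη.trans_le hη_le) (by positivity)
  have hslope_le : η / 2 ^ d ≤ slope := by
    rw [div_le_iff₀' (by positivity), ← mul_pow_sub_one hd (2 : ℝ)]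
    refine hη_le.trans ?_
    gcongr
    linarith [le_abs_self ε]
  simpa only [id, mul_one, add_comm] using hslope_le

theorem monotoneOn_radialScale_mul_self_sub (hd : d ≠ 0) (hη : 0 < η) (hdm : d ≤ η * m)
    (hε : |ε| ≤ 1 - 2 * η) :
    MonotoneOn (fun r ↦ radialScale d m ε r * r - η / 2 ^ d * r) (Set.Ici 0) := by
  have hcont := (lipschitzOnWith_radialScale hd hη hdm hε).continuousOn.mono
    (Set.Icc_subset_Ici_self : Set.Icc (0 : ℝ) 1 ⊆ _)
  have hderiv : ∀ r ∈ interior (Set.Icc (0 : ℝ) 1), ∃ slope, 0 ≤ slope ∧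
      HasDerivAt (fun r ↦ radialScale d m ε r * r - η / 2 ^ d * r) slope r := fun r hr ↦ by
    rw [interior_Icc] at hr
    obtain ⟨slope, hslope, hle⟩ :=
      exists_hasDerivAt_radialScale_mul_self hd hη hdm hε hr.1.le hr.2
    exact ⟨_, sub_nonneg.2 hle, hslope.sub (hasDerivAt_const_mul (η / 2 ^ d))⟩
  choose! slope hnonneg hslope using hderiv
  have hinner : MonotoneOn (fun r ↦ radialScale d m ε r * r - η / 2 ^ d * r) (Set.Icc 0 1) :=
    monotoneOn_of_deriv_nonneg (convex_Icc 0 1) (by fun_prop)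
      (fun r hr ↦ (hslope r hr).differentiableAt.differentiableWithinAt)
      (fun r hr ↦ (hslope r hr).deriv ▸ hnonneg r hr)
  have houter : MonotoneOn (fun r ↦ radialScale d m ε r * r - η / 2 ^ d * r) (Set.Ici 1) := by
    have hle : η / 2 ^ d ≤ 1 :=
      div_le_one_of_le₀ (by linarith [abs_nonneg ε, one_le_pow₀ (n := d) (one_le_two (α := ℝ))])
        (by positivity)
    intro r hr s hs hrs
    simp only [radialScale_of_one_le hr, radialScale_of_one_le hs, ← sub_mul]
    gcongr
  rw [← Set.Icc_union_Ici_eq_Ici zero_le_one]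
  exact hinner.union_right houter (isGreatest_Icc zero_le_one) isLeast_Ici

theorem isRadialProfile_radialScale (hd : d ≠ 0) (hη : 0 < η) (hdm : d ≤ η * m)
    (hε : |ε| ≤ 1 - 2 * η) :
    IsRadialProfile ‖ε / η‖₊ (Real.toNNReal (η / 2 ^ d)) (radialScale d m ε) where
  pos := Real.toNNReal_pos.2 (by positivity)
  eq_one _ := radialScale_of_one_le
  lipschitzOnWith := lipschitzOnWith_radialScale hd hη hdm hε
  monotoneOn := by
    rw [Real.coe_toNNReal _ (by positivity)]
    exact monotoneOn_radialScale_mul_self_sub hd hη hdm hε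

theorem hasJacobianAt_radialMap_radialScale {E : Type*} [NormedAddCommGroup E] [NormedSpace ℝ E]
    [FiniteDimensional ℝ E] {a y : E} (hη : 0 < η) (hd : finrank ℝ E ≠ 0)
    (hdm : finrank ℝ E ≤ η * m) (hε : |ε| ≤ 1 - 2 * η) (hy : ‖y - a‖ < 1)
    (hnorm : DifferentiableAt ℝ (fun x : E ↦ ‖x‖) (y - a)) :
    HasJacobianAt (radialMap (radialScale (finrank ℝ E) m ε) a)
      ((1 + ε * (1 + finrank ℝ E / m) * cutoff m ‖y - a‖) / (1 + ε)) y := by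
  have hm : m ≠ 0 := ne_zero_of_le_mul hd hdm
  have hε0 : 1 + ε ≠ 0 := by linarith [neg_abs_le ε]
  have hlam0 := (radialScale_mem_Ioc hη hdm hε (norm_nonneg (y - a))).1.ne'
  obtain ⟨lam', hlam', hslope⟩ := exists_hasDerivAt_radialScale hd hm hε0 hy
    (one_half_pos.trans_le (volumeRatio_mem_Icc hη hdm hε (norm_nonneg _)).1)
  convert hasJacobianAt_radialMap hlam' hlam0 hnorm using 1
  rw [← hslope, mul_div_cancel_left₀ _ hε0, ← mul_pow_sub_one hd]
  field_simp

end RadialScale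

section PermSupport

variable {α : Type*} {σ τ : Equiv.Perm α} {s t : Set α} {x : α}

theorem perm_apply_mem_iff (hσ : ∀ x ∉ s, σ x = x) : σ x ∈ s ↔ x ∈ s := by
  refine ⟨fun hx ↦ ?_, fun hx ↦ ?_⟩ <;> by_contra hnot
  · exact hnot (hσ x hnot ▸ hx)
  · exact hnot ((σ.injective (hσ _ hnot)).symm ▸ hx)

theorem perm_mul_apply_of_mem_left (hτ : ∀ x ∉ t, τ x = x) (hst : Disjoint s t) (hx : x ∈ s) :
    (σ * τ) x = σ x := by
  rw [Equiv.Perm.mul_apply, hτ x (hst.notMem_of_mem_left hx)]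

theorem perm_mul_apply_of_mem_right (hσ : ∀ x ∉ s, σ x = x) (hτ : ∀ x ∉ t, τ x = x)
    (hst : Disjoint s t) (hx : x ∈ t) : (σ * τ) x = τ x :=
  hσ _ (hst.notMem_of_mem_right ((perm_apply_mem_iff hτ).2 hx))

theorem perm_symm_eq_self (hσ : ∀ x ∉ s, σ x = x) (hx : x ∉ s) : σ.symm x = x :=
  (Equiv.symm_apply_eq σ).2 (hσ x hx).symm

theorem perm_mul_symm_mem_left (hσ : ∀ x ∉ s, σ x = x) (hτ : ∀ x ∉ t, τ x = x)
    (hst : Disjoint s t) (hx : x ∈ s) : (σ * τ).symm x ∈ s := by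
  have hmem : σ.symm x ∈ s := (perm_apply_mem_iff fun _ ↦ perm_symm_eq_self hσ).2 hx
  change τ.symm (σ.symm x) ∈ s
  rwa [perm_symm_eq_self hτ (hst.notMem_of_mem_left hmem)]

theorem perm_mul_symm_mem_right (hσ : ∀ x ∉ s, σ x = x) (hτ : ∀ x ∉ t, τ x = x)
    (hst : Disjoint s t) (hx : x ∈ t) : (σ * τ).symm x ∈ t := by
  change τ.symm (σ.symm x) ∈ t
  rw [perm_symm_eq_self hσ (hst.notMem_of_mem_right hx)]
  exact (perm_apply_mem_iff fun _ ↦ perm_symm_eq_self hτ).2 hx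

end PermSupport

section RadialPair

variable {E : Type*} [NormedAddCommGroup E] [NormedSpace ℝ E] {K c : ℝ≥0} {lam₁ lam₂ : ℝ → ℝ}
  {e y : E}

theorem disjoint_ball_neg_ball (he : ‖e‖ = 1) : Disjoint (ball (-e) 1) (ball e 1) := by
  refine ball_disjoint_ball ?_
  rw [dist_comm, dist_eq_norm, sub_neg_eq_add, ← two_smul ℝ e, norm_smul, he]
  norm_num

theorem one_le_norm_sub_of_mem_ball_neg (he : ‖e‖ = 1) (hy : y ∈ ball (-e) 1) :
    1 ≤ ‖y - e‖ := by
  simpa [dist_eq_norm] using (disjoint_ball_neg_ball he).notMem_of_mem_left hy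

theorem one_le_norm_add_of_mem_ball (he : ‖e‖ = 1) (hy : y ∈ ball e 1) :
    1 ≤ ‖y + e‖ := by
  simpa [dist_eq_norm] using (disjoint_ball_neg_ball he).notMem_of_mem_right hy

/-- The product of a radial permutation of the unit ball about `-e` and one of the unit ball about
`e`, where `e` is a unit vector. -/
noncomputable def radialPairPerm (h₁ : IsRadialProfile K c lam₁) (h₂ : IsRadialProfile K c lam₂)
    (e : E) : Equiv.Perm E :=
  h₁.radialPerm (-e) * h₂.radialPerm e

variable (h₁ : IsRadialProfile K c lam₁) (h₂ : IsRadialProfile K c lam₂)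

theorem radialPairPerm_apply_of_mem_ball_neg (he : ‖e‖ = 1) (hy : y ∈ ball (-e) 1) :
    radialPairPerm h₁ h₂ e y = radialMap lam₁ (-e) y :=
  perm_mul_apply_of_mem_left (fun _ ↦ h₂.radialPerm_eq_self_of_notMem)
    (disjoint_ball_neg_ball he) hy

theorem radialPairPerm_apply_of_mem_ball (he : ‖e‖ = 1) (hy : y ∈ ball e 1) :
    radialPairPerm h₁ h₂ e y = radialMap lam₂ e y :=
  perm_mul_apply_of_mem_right (fun _ ↦ h₁.radialPerm_eq_self_of_notMem)
    (fun _ ↦ h₂.radialPerm_eq_self_of_notMem) (disjoint_ball_neg_ball he) hy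

theorem radialPairPerm_eq_self (hy₁ : 1 ≤ ‖y + e‖) (hy₂ : 1 ≤ ‖y - e‖) :
    radialPairPerm h₁ h₂ e y = y := by
  rw [radialPairPerm, Equiv.Perm.mul_apply]
  exact (congrArg _ (h₂.radialMap_eq_self hy₂)).trans
    (h₁.radialMap_eq_self (by rwa [sub_neg_eq_add]))

theorem radialPairPerm_symm_mem_ball_neg (he : ‖e‖ = 1) (hy : y ∈ ball (-e) 1) :
    (radialPairPerm h₁ h₂ e).symm y ∈ ball (-e) 1 :=
  perm_mul_symm_mem_left (fun _ ↦ h₁.radialPerm_eq_self_of_notMem)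
    (fun _ ↦ h₂.radialPerm_eq_self_of_notMem) (disjoint_ball_neg_ball he) hy

theorem radialPairPerm_symm_mem_ball (he : ‖e‖ = 1) (hy : y ∈ ball e 1) :
    (radialPairPerm h₁ h₂ e).symm y ∈ ball e 1 :=
  perm_mul_symm_mem_right (fun _ ↦ h₁.radialPerm_eq_self_of_notMem)
    (fun _ ↦ h₂.radialPerm_eq_self_of_notMem) (disjoint_ball_neg_ball he) hy

theorem lipschitzWith_radialPairPerm_sub_id (e : E) :
    LipschitzWith (2 * K * (2 * K + 1) + 2 * K) fun y ↦ radialPairPerm h₁ h₂ e y - y :=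
  lipschitzWith_comp_sub_id (f := h₁.radialPerm (-e)) (h₁.lipschitzWith_radialMap_sub_id (-e))
    (h₂.lipschitzWith_radialMap_sub_id e)

theorem antilipschitzWith_radialPairPerm (e : E) :
    AntilipschitzWith ((1 + K / c) / c * ((1 + K / c) / c)) (radialPairPerm h₁ h₂ e) :=
  (h₁.antilipschitzWith_radialMap (-e)).comp (h₂.antilipschitzWith_radialMap e)

end RadialPair

section Balancing

variable {E : Type*} [NormedAddCommGroup E] [NormedSpace ℝ E] {K k : ℝ≥0} {lam₁ lam₂ : ℝ → ℝ}
  {m : ℕ} {c : ℝ} {e y : E}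

/-- Undo a pair of radial maps of the unit balls about `-e` and `e`, then shear along `e` with
density the bump `cutoff m ‖y‖`. -/
noncomputable def balancingPerm (h₁ : IsRadialProfile K k lam₁) (h₂ : IsRadialProfile K k lam₂)
    (m : ℕ) (e : E) (hc : |c| < 1) : Equiv.Perm E :=
  (radialPairPerm h₁ h₂ e).symm.trans <|
    Equiv.ofBijective (shear (fun y ↦ cutoff m ‖y‖) e c)
      (shear_bijective (fun _ ↦ cutoff_mem_Icc (norm_nonneg _))
        (lipschitzWith_cutoff_norm m).continuous hc e)

/-- The Lipschitz constant of `balancingPerm - id` for a shear of size `C` and radial profiles that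
are `K`-Lipschitz with slope at least `k`. -/
noncomputable def balancingConst (m : ℕ) (C K k : ℝ≥0) : ℝ≥0 :=
  (C * (2 * m) + (2 * K * (2 * K + 1) + 2 * K)) * ((1 + K / k) / k * ((1 + K / k) / k))

theorem balancingConst_mul_le {x : ℝ≥0} (hx : x ≤ 1) (C : ℝ≥0) :
    balancingConst m (x * C) (x * K) k ≤ balancingConst m C K k * x := by
  have hK : x * K ≤ K := mul_le_of_le_one_left zero_le hx
  calc balancingConst m (x * C) (x * K) k
      ≤ (x * C * (2 * m) + (2 * (x * K) * (2 * K + 1) + 2 * (x * K))) *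
          ((1 + K / k) / k * ((1 + K / k) / k)) := by
        rw [balancingConst]
        gcongr
    _ = balancingConst m C K k * x := by
        rw [balancingConst]
        ring

variable (h₁ : IsRadialProfile K k lam₁) (h₂ : IsRadialProfile K k lam₂) (hc : |c| < 1)

theorem balancingPerm_eq_self (hy : ∀ t ∈ Set.Icc (-1 : ℝ) 1, 1 ≤ ‖y + t • e‖) :
    balancingPerm h₁ h₂ m e hc y = y := by
  have hpair : (radialPairPerm h₁ h₂ e).symm y = y :=
    (Equiv.symm_apply_eq _).2 (radialPairPerm_eq_self h₁ h₂ (by simpa using hy 1 (by norm_num))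
      (by simpa [← sub_eq_add_neg] using hy (-1) (by norm_num))).symm
  rw [balancingPerm, Equiv.trans_apply, hpair]
  exact shear_eq_self fun t ht ↦ cutoff_of_one_le (hy t ht)

theorem lipschitzWith_balancingPerm_sub_id (he : ‖e‖ = 1) :
    LipschitzWith (balancingConst m ‖c‖₊ K k) fun y ↦ balancingPerm h₁ h₂ m e hc y - y :=
  lipschitzWith_comp_symm_sub_id (lipschitzWith_shear_sub_id (lipschitzWith_cutoff_norm m) he c)
    (lipschitzWith_radialPairPerm_sub_id h₁ h₂ e) (antilipschitzWith_radialPairPerm h₁ h₂ e)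

end Balancing

section TwoBalls

variable {E : Type*} [NormedAddCommGroup E] [NormedSpace ℝ E] [FiniteDimensional ℝ E]
  {m : ℕ} {η ε : ℝ} {e : E}

theorem hasJacobianAt_comp_symm_of_radial {p : Equiv.Perm E} {v : E → E} {a z : E} (hη : 0 < η)
    (hd : finrank ℝ E ≠ 0) (hdm : finrank ℝ E ≤ η * m) (hε : |ε| ≤ 1 - 2 * η)
    (hz : p.symm z ∈ ball a 1) (hnorm : DifferentiableAt ℝ (fun x ↦ ‖x‖) (p.symm z - a))
    (hp : ∀ y ∈ ball a 1, p y = radialMap (radialScale (finrank ℝ E) m ε) a y)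
    (hcont : Continuous p.symm)
    (hv : HasJacobianAt v (1 + ε * (1 + finrank ℝ E / m) * cutoff m ‖p.symm z - a‖) (p.symm z)) :
    HasJacobianAt (v ∘ p.symm) (1 + ε) z := by
  have hε0 : 1 + ε ≠ 0 := by linarith [neg_abs_le ε]
  have hdensity : 1 + ε * (1 + finrank ℝ E / m) * cutoff m ‖p.symm z - a‖ ≠ 0 :=
    (hη.trans_le (le_one_add_mul_cutoff hη hdm hε (norm_nonneg _))).ne'
  have hjac := (hasJacobianAt_radialMap_radialScale hη hd hdm hε (mem_ball_iff_norm.1 hz)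
    hnorm).congr_of_eventuallyEq (eventually_of_mem (isOpen_ball.mem_nhds hz) hp)
  convert hv.comp (hjac.symm (div_ne_zero hdensity hε0) hcont.continuousAt) using 1
  field_simp

variable [MeasurableSpace E] [BorelSpace E] {μ : Measure E} [μ.IsAddHaarMeasure]

theorem ae_differentiableAt_norm_sub (a : E) :
    ∀ᵐ y ∂μ, DifferentiableAt ℝ (fun x : E ↦ ‖x‖) (y - a) :=
  (measurePreserving_sub_right μ a).quasiMeasurePreserving.ae
    lipschitzWith_one_norm.ae_differentiableAt

theorem ae_hasJacobianAt_comp_symm_of_radial {p : Equiv.Perm E} {v : E → E} {a : E} {K M : ℝ≥0}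
    (hη : 0 < η) (hd : finrank ℝ E ≠ 0) (hdm : finrank ℝ E ≤ η * m) (hε : |ε| ≤ 1 - 2 * η)
    (hpK : LipschitzWith K p) (hpM : AntilipschitzWith M p)
    (hp : ∀ y ∈ ball a 1, p y = radialMap (radialScale (finrank ℝ E) m ε) a y)
    (hmem : ∀ y ∈ ball a 1, p.symm y ∈ ball a 1)
    (hv : ∀ᵐ y ∂μ, y ∈ ball a 1 →
      HasJacobianAt v (1 + ε * (1 + finrank ℝ E / m) * cutoff m ‖y - a‖) y) :
    ∀ᵐ z ∂μ, z ∈ ball a 1 → HasJacobianAt (v ∘ p.symm) (1 + ε) z := by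
  have hcont : Continuous p.symm := (hpM.to_rightInverse p.apply_symm_apply).continuous
  have hgood := ae_comp_of_lipschitzWith_symm (σ := p.symm) hpK
    (hv.and (ae_differentiableAt_norm_sub a))
  filter_upwards [hgood] with z ⟨hvz, hnorm⟩ hz
  exact hasJacobianAt_comp_symm_of_radial hη hd hdm hε (hmem z hz) hnorm hp hcont (hvz (hmem z hz))

theorem ae_hasJacobianAt_shear_of_mem_ball_neg (he : ‖e‖ = 1) (c : ℝ) :
    ∀ᵐ y ∂μ, y ∈ ball (-e) 1 →
      HasJacobianAt (shear (fun x ↦ cutoff m ‖x‖) e c) (1 + c * cutoff m ‖y - -e‖) y := by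
  filter_upwards [ae_hasJacobianAt_shear (lipschitzWith_cutoff_norm m) e c] with y hjac hy
  rwa [cutoff_of_one_le (one_le_norm_sub_of_mem_ball_neg he hy), sub_zero,
    ← sub_neg_eq_add y e] at hjac

theorem ae_hasJacobianAt_shear_of_mem_ball (he : ‖e‖ = 1) (c : ℝ) :
    ∀ᵐ y ∂μ, y ∈ ball e 1 →
      HasJacobianAt (shear (fun x ↦ cutoff m ‖x‖) e c) (1 + -c * cutoff m ‖y - e‖) y := by
  filter_upwards [ae_hasJacobianAt_shear (lipschitzWith_cutoff_norm m) e c] with y hjac hy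
  rwa [cutoff_of_one_le (one_le_norm_add_of_mem_ball he hy), zero_sub, ← neg_mul_comm] at hjac

theorem ae_hasJacobianAt_balancingPerm (hη : 0 < η) (he : ‖e‖ = 1) (hd : finrank ℝ E ≠ 0)
    (hdm : finrank ℝ E ≤ η * m) (hε : |ε| ≤ 1 - 2 * η) {K k : ℝ≥0}
    (h₁ : IsRadialProfile K k (radialScale (finrank ℝ E) m ε))
    (h₂ : IsRadialProfile K k (radialScale (finrank ℝ E) m (-ε)))
    (hc : |ε * (1 + finrank ℝ E / m)| < 1) :
    ∀ᵐ y ∂μ, (y ∈ ball (-e) 1 → HasJacobianAt (balancingPerm h₁ h₂ m e hc) (1 + ε) y) ∧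
      (y ∈ ball e 1 → HasJacobianAt (balancingPerm h₁ h₂ m e hc) (1 - ε) y) := by
  have hlip := lipschitzWith_of_sub_id (lipschitzWith_radialPairPerm_sub_id h₁ h₂ e)
  have hanti := antilipschitzWith_radialPairPerm h₁ h₂ e
  have hneg := ae_hasJacobianAt_comp_symm_of_radial (μ := μ) hη hd hdm hε hlip hanti
    (fun _ ↦ radialPairPerm_apply_of_mem_ball_neg h₁ h₂ he)
    (fun _ ↦ radialPairPerm_symm_mem_ball_neg h₁ h₂ he)
    (ae_hasJacobianAt_shear_of_mem_ball_neg he _)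
  have hpos := ae_hasJacobianAt_comp_symm_of_radial (μ := μ) hη hd hdm (by rwa [abs_neg]) hlip hanti
    (fun _ ↦ radialPairPerm_apply_of_mem_ball h₁ h₂ he)
    (fun _ ↦ radialPairPerm_symm_mem_ball h₁ h₂ he)
    (by simpa only [neg_mul] using ae_hasJacobianAt_shear_of_mem_ball he _)
  exact hneg.and hpos

theorem exists_perm_hasJacobianAt_balls (hη : 0 < η) (he : ‖e‖ = 1) :
    ∃ C : ℝ≥0, ∀ ε : ℝ, |ε| ≤ 1 - 2 * η → ∃ Φ : Equiv.Perm E,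
      LipschitzWith (C * ‖ε‖₊) (fun y ↦ Φ y - y) ∧
      (∀ᵐ y ∂μ, (y ∈ ball (-e) 1 → HasJacobianAt Φ (1 + ε) y) ∧
        (y ∈ ball e 1 → HasJacobianAt Φ (1 - ε) y)) ∧
      ∀ y, (∀ t ∈ Set.Icc (-1 : ℝ) 1, 1 ≤ ‖y + t • e‖) → Φ y = y := by
  have hd : finrank ℝ E ≠ 0 :=
    have : Nontrivial E := ⟨e, 0, norm_ne_zero_iff.1 (by simp [he])⟩
    finrank_pos.ne'
  obtain ⟨m, hdm⟩ := exists_nat_ge (finrank ℝ E / η)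
  rw [div_le_iff₀' hη] at hdm
  refine ⟨balancingConst m ‖(1 + finrank ℝ E / m : ℝ)‖₊ ‖η⁻¹‖₊ (η / 2 ^ finrank ℝ E).toNNReal,
    fun ε hε ↦ ?_⟩
  have h₁ := isRadialProfile_radialScale hd hη hdm hε
  have h₂ := isRadialProfile_radialScale hd hη hdm (ε := -ε) (by rwa [abs_neg])
  have hc : |ε * (1 + finrank ℝ E / m)| < 1 :=
    (abs_mul_one_add_div_le hη hdm hε).trans_lt (by linarith)
  rw [neg_div, nnnorm_neg] at h₂
  refine ⟨balancingPerm h₁ h₂ m e hc, (lipschitzWith_balancingPerm_sub_id h₁ h₂ hc he).weaken ?_,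
    ae_hasJacobianAt_balancingPerm hη he hd hdm hε h₁ h₂ hc,
    fun y ↦ balancingPerm_eq_self h₁ h₂ hc⟩
  have hε1 : ‖ε‖₊ ≤ 1 := by
    rw [← NNReal.coe_le_coe, coe_nnnorm, Real.norm_eq_abs, NNReal.coe_one]
    linarith
  rw [div_eq_mul_inv ε η, nnnorm_mul, nnnorm_mul]
  exact balancingConst_mul_le hε1 _

end TwoBalls

section AffineConjugation

variable {E : Type*} [NormedAddCommGroup E] [NormedSpace ℝ E]

/-- The conjugate of `Φ` by the affine map `x ↦ L (x - a)`. -/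
def affineConj (L : E ≃L[ℝ] E) (a : E) (Φ : Equiv.Perm E) : Equiv.Perm E :=
  (((Equiv.subRight a).trans L.toEquiv).trans Φ).trans ((Equiv.subRight a).trans L.toEquiv).symm

variable {L : E ≃L[ℝ] E} {a x : E} {Φ : Equiv.Perm E}

theorem affineConj_apply : affineConj L a Φ x = L.symm (Φ (L (x - a))) + a := rfl

theorem affineConj_eq_self (hx : Φ (L (x - a)) = L (x - a)) : affineConj L a Φ x = x := by
  rw [affineConj_apply, hx, L.symm_apply_apply, sub_add_cancel]

theorem lipschitzWith_affineConj_sub_id {K : ℝ≥0} (hΦ : LipschitzWith K fun x ↦ Φ x - x) :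
    LipschitzWith (‖(L.symm : E →L[ℝ] E)‖₊ * K * ‖(L : E →L[ℝ] E)‖₊)
      fun x ↦ affineConj L a Φ x - x := by
  have hconj (x : E) :
      affineConj L a Φ x - x = L.symm (Φ (L (x - a)) - L (x - a)) := by
    rw [affineConj_apply, map_sub L.symm, L.symm_apply_apply]
    abel
  have hsub : LipschitzWith 1 fun x : E ↦ x - a := by
    simpa using LipschitzWith.id.sub (LipschitzWith.const a)
  simpa only [hconj, Function.comp_def, ContinuousLinearEquiv.coe_coe, mul_assoc, mul_one] using
    (L.symm : E →L[ℝ] E).lipschitz.comp (hΦ.comp ((L : E →L[ℝ] E).lipschitz.comp hsub))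

theorem ae_comp_map_sub [FiniteDimensional ℝ E] [MeasurableSpace E] [BorelSpace E]
    {μ : Measure E} [μ.IsAddHaarMeasure] (L : E ≃L[ℝ] E) (a : E) {P : E → Prop}
    (hP : ∀ᵐ y ∂μ, P y) : ∀ᵐ x ∂μ, P (L (x - a)) :=
  ae_comp_of_lipschitzWith_symm (σ := (Equiv.subRight a).trans L.toEquiv)
    ((L.symm : E →L[ℝ] E).lipschitz.add (LipschitzWith.const a)) hP

end AffineConjugation

section HalfCubes

theorem ae_forall_apply_ne {ι : Type*} [Fintype ι] (c : ℝ) :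
    ∀ᵐ x : ι → ℝ, ∀ i, x i ≠ c :=
  ae_all_iff.2 fun i ↦ Measure.ae_eval_ne (fun _ : ι ↦ (volume : Measure ℝ)) i c

variable {ι : Type*} [DecidableEq ι] {l : ι} {x : ι → ℝ}

/-- The diagonal map with entry `4` in coordinate `l` and `2` elsewhere. After centring at
`(1/2, …, 1/2)` it carries the halves `x l < 1/2` and `x l > 1/2` of the open unit cube to the
sup-norm unit balls about `-Pi.single l 1` and `Pi.single l 1`. -/
noncomputable def halfCubeScaling (l : ι) : (ι → ℝ) ≃L[ℝ] (ι → ℝ) :=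
  ContinuousLinearEquiv.piCongrRight fun i ↦
    ContinuousLinearEquiv.unitsEquivAut ℝ
      (Units.mk0 (if i = l then 4 else 2) (by split_ifs <;> norm_num))

theorem halfCubeScaling_apply (l : ι) (x : ι → ℝ) (i : ι) :
    halfCubeScaling l x i = x i * if i = l then 4 else 2 := rfl

variable [Fintype ι]

theorem one_le_norm_halfCubeScaling_add {i : ι} (hx : x i ∉ Set.Ioo (0 : ℝ) 1) {t : ℝ}
    (ht : t ∈ Set.Icc (-1 : ℝ) 1) :
    1 ≤ ‖halfCubeScaling l (x - fun _ ↦ 1 / 2) + t • Pi.single l 1‖ := by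
  refine le_trans ?_ (norm_le_pi_norm _ i)
  rw [Real.norm_eq_abs, le_abs']
  have hx' : x i ≤ 0 ∨ 1 ≤ x i := by simpa [or_iff_not_imp_left] using hx
  obtain ⟨ht₁, ht₂⟩ := ht
  rcases eq_or_ne i l with rfl | hil
  · simp only [halfCubeScaling_apply, Pi.add_apply, Pi.sub_apply, Pi.smul_apply, smul_eq_mul,
      Pi.single_eq_same, if_true]
    exact hx'.imp (by intro; linarith) (by intro; linarith)
  · simp only [halfCubeScaling_apply, Pi.add_apply, Pi.sub_apply, Pi.smul_apply, smul_eq_mul,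
      Pi.single_eq_of_ne hil, if_neg hil]
    exact hx'.imp (by intro; linarith) (by intro; linarith)

theorem halfCubeScaling_mem_ball_neg (hx : ∀ i, x i ∈ Set.Ioo (0 : ℝ) 1) (hl : x l < 1 / 2) :
    halfCubeScaling l (x - fun _ ↦ 1 / 2) ∈ ball (-Pi.single l 1) 1 := by
  rw [mem_ball_iff_norm, pi_norm_lt_iff one_pos]
  intro i
  rw [Real.norm_eq_abs, abs_lt]
  obtain ⟨h0, h1⟩ := hx i
  rcases eq_or_ne i l with rfl | hil
  · simp only [halfCubeScaling_apply, Pi.sub_apply, Pi.neg_apply, Pi.single_eq_same, if_true]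
    constructor <;> linarith
  · simp only [halfCubeScaling_apply, Pi.sub_apply, Pi.neg_apply, Pi.single_eq_of_ne hil,
      if_neg hil]
    constructor <;> linarith

theorem halfCubeScaling_mem_ball (hx : ∀ i, x i ∈ Set.Ioo (0 : ℝ) 1) (hl : 1 / 2 < x l) :
    halfCubeScaling l (x - fun _ ↦ 1 / 2) ∈ ball (Pi.single l 1) 1 := by
  rw [mem_ball_iff_norm, pi_norm_lt_iff one_pos]
  intro i
  rw [Real.norm_eq_abs, abs_lt]
  obtain ⟨h0, h1⟩ := hx i
  rcases eq_or_ne i l with rfl | hil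
  · simp only [halfCubeScaling_apply, Pi.sub_apply, Pi.single_eq_same, if_true]
    constructor <;> linarith
  · simp only [halfCubeScaling_apply, Pi.sub_apply, Pi.single_eq_of_ne hil, if_neg hil]
    constructor <;> linarith

end HalfCubes

theorem exists_perm_hasJacobianAt_halfCubes {ι : Type*} [Fintype ι] {η : ℝ} (hη : 0 < η)
    (l : ι) :
    ∃ C : ℝ≥0, ∀ ε : ℝ, |ε| ≤ 1 - 2 * η → ∃ Φ : Equiv.Perm (ι → ℝ),
      LipschitzWith (C * ‖ε‖₊) (fun x ↦ Φ x - x) ∧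
      (∀ᵐ x : ι → ℝ, (∀ i, x i ∈ Set.Icc (0 : ℝ) 1) →
        (x l ≤ 1 / 2 → HasJacobianAt Φ (1 + ε) x) ∧
        (1 / 2 ≤ x l → HasJacobianAt Φ (1 - ε) x)) ∧
      ∀ x, (∃ i, x i ∉ Set.Ioo (0 : ℝ) 1) → Φ x = x := by
  classical
  have he : ‖(Pi.single l 1 : ι → ℝ)‖ = 1 := by rw [Pi.norm_single, norm_one]
  obtain ⟨C, hC⟩ := exists_perm_hasJacobianAt_balls (μ := (volume : Measure (ι → ℝ))) hη he
  let L := halfCubeScaling l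
  refine ⟨‖(L.symm : (ι → ℝ) →L[ℝ] (ι → ℝ))‖₊ * C * ‖(L : (ι → ℝ) →L[ℝ] (ι → ℝ))‖₊,
    fun ε hε ↦ ?_⟩
  obtain ⟨Φ, hlip, hjac, hself⟩ := hC ε hε
  refine ⟨affineConj L (fun _ ↦ 1 / 2) Φ, ?_, ?_, ?_⟩
  · exact (lipschitzWith_affineConj_sub_id hlip).weaken (le_of_eq (by ring))
  · filter_upwards [ae_comp_map_sub L (fun _ ↦ 1 / 2) hjac, ae_forall_apply_ne 0,
      ae_forall_apply_ne 1, ae_forall_apply_ne (1 / 2)] with x hx h0 h1 hmid hcube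
    have hopen (i : ι) : x i ∈ Set.Ioo (0 : ℝ) 1 :=
      ⟨(hcube i).1.lt_of_ne' (h0 i), (hcube i).2.lt_of_ne (h1 i)⟩
    exact ⟨fun hl ↦ (hx.1 (halfCubeScaling_mem_ball_neg hopen
        (hl.lt_of_ne (hmid l)))).conj_comp_sub,
      fun hl ↦ (hx.2 (halfCubeScaling_mem_ball hopen (hl.lt_of_ne' (hmid l)))).conj_comp_sub⟩
  · rintro x ⟨i, hi⟩
    exact affineConj_eq_self (hself _ fun t ↦ one_le_norm_halfCubeScaling_add hi)

section UnitCube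

variable {d : ℕ}

theorem norm_sub_le_eudist (x y : Fin d → ℝ) : ‖x - y‖ ≤ eudist x y := by
  refine (pi_norm_le_iff_of_nonneg (Real.sqrt_nonneg _)).2 fun i ↦ Real.abs_le_sqrt ?_
  exact Finset.single_le_sum (f := fun i ↦ (x i - y i) ^ 2) (fun i _ ↦ sq_nonneg _)
    (Finset.mem_univ i)

theorem eudist_le_sqrt_mul_norm_sub (x y : Fin d → ℝ) : eudist x y ≤ √d * ‖x - y‖ := by
  have hsum : ∑ i, (x i - y i) ^ 2 ≤ d * ‖x - y‖ ^ 2 := by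
    simpa using Finset.sum_le_card_nsmul Finset.univ (fun i ↦ (x i - y i) ^ 2) (‖x - y‖ ^ 2)
      fun i _ ↦ sq_le_sq' (neg_le_of_abs_le (norm_le_pi_norm (x - y) i))
        (le_of_abs_le (norm_le_pi_norm (x - y) i))
  rw [eudist, ← Real.sqrt_sq (norm_nonneg (x - y)), ← Real.sqrt_mul (Nat.cast_nonneg d)]
  exact Real.sqrt_le_sqrt hsum

theorem eudist_le_of_lipschitzWith {K : ℝ≥0} {f : (Fin d → ℝ) → Fin d → ℝ}
    (hf : LipschitzWith K f) (x y : Fin d → ℝ) :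
    eudist (f x) (f y) ≤ √d * K * eudist x y := calc
  eudist (f x) (f y) ≤ √d * ‖f x - f y‖ := eudist_le_sqrt_mul_norm_sub _ _
  _ ≤ √d * (K * ‖x - y‖) := by
    gcongr
    exact hf.norm_sub_le x y
  _ ≤ √d * (K * eudist x y) := by
    gcongr
    exact norm_sub_le_eudist x y
  _ = √d * K * eudist x y := (mul_assoc _ _ _).symm

theorem measurableSet_unitCube (d : ℕ) : MeasurableSet (unitCube d) := by
  simp only [unitCube, Set.ofPred_forall]
  measurability

theorem exists_notMem_Ioo_of_mem_frontier_unitCube {x : Fin d → ℝ}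
    (hx : x ∈ frontier (unitCube d)) : ∃ i, x i ∉ Set.Ioo (0 : ℝ) 1 := by
  by_contra! hopen
  have hsub : (Set.univ.pi fun _ ↦ Set.Ioo 0 1) ⊆ unitCube d :=
    fun y hy i ↦ Set.Ioo_subset_Icc_self (hy i trivial)
  exact hx.2 (mem_interior.2 ⟨_, hsub, isOpen_set_pi Set.finite_univ fun _ _ ↦ isOpen_Ioo,
    fun i _ ↦ hopen i⟩)

theorem bijOn_unitCube {Φ : Equiv.Perm (Fin d → ℝ)}
    (hΦ : ∀ x, (∃ i, x i ∉ Set.Ioo (0 : ℝ) 1) → Φ x = x) :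
    Set.BijOn Φ (unitCube d) (unitCube d) :=
  Φ.bijOn fun _ ↦ perm_apply_mem_iff fun x hx ↦
    hΦ x (not_forall.1 fun hopen ↦ hx fun i ↦ Set.Ioo_subset_Icc_self (hopen i))

theorem ae_restrict_exists_hasFDerivWithinAt {E : Type*} [NormedAddCommGroup E] [NormedSpace ℝ E]
    [MeasurableSpace E] {μ : Measure E} {s t : Set E} {f : E → E} {J : ℝ} (hs : MeasurableSet s)
    (hf : ∀ᵐ x ∂μ, x ∈ s → HasJacobianAt f J x) :
    ∀ᵐ x ∂μ.restrict s, ∃ D : E →L[ℝ] E, HasFDerivWithinAt f D t x ∧ D.det = J := by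
  rw [ae_restrict_iff' hs]
  filter_upwards [hf] with x hx hxs
  obtain ⟨D, hD, hdet⟩ := hx hxs
  exact ⟨D, hD.hasFDerivWithinAt, hdet⟩

end UnitCube

/-- (Rivière–Ye, Lemma 1.) For `α + β = 1` with `η ≤ α ≤ 1 − η` there is a Lipschitz
homeomorphism `Φ` of `[0,1]^d` fixing the boundary, whose Jacobian is a.e. equal to `2α`
on the lower half `A = [0,1]^{d−1} × [0,1/2]` and to `2β` on the upper half
`B = [0,1]^{d−1} × [1/2,1]`, and with `Lip(Φ − id) ≤ Δ·|1 − 2α|`. -/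
theorem stmt_6 (d : ℕ) (hd : 1 ≤ d) (η : ℝ) (hη : 0 < η) :
    ∃ Δ : ℝ, 0 < Δ ∧
      ∀ α β : ℝ, 0 ≤ α → 0 ≤ β → α + β = 1 → η ≤ α → α ≤ 1 - η →
        ∃ Φ : (Fin d → ℝ) → (Fin d → ℝ),
          Set.BijOn Φ (unitCube d) (unitCube d) ∧
          ContinuousOn Φ (unitCube d) ∧
          (∀ x ∈ frontier (unitCube d), Φ x = x) ∧
          (∀ᵐ x ∂(volume.restrict {x ∈ unitCube d | x (⟨d - 1, by omega⟩ : Fin d) ≤ 1 / 2}),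
            ∃ D : (Fin d → ℝ) →L[ℝ] (Fin d → ℝ),
              HasFDerivWithinAt Φ D (unitCube d) x ∧ D.det = 2 * α) ∧
          (∀ᵐ x ∂(volume.restrict {x ∈ unitCube d | 1 / 2 ≤ x (⟨d - 1, by omega⟩ : Fin d)}),
            ∃ D : (Fin d → ℝ) →L[ℝ] (Fin d → ℝ),
              HasFDerivWithinAt Φ D (unitCube d) x ∧ D.det = 2 * β) ∧
          (∀ x ∈ unitCube d, ∀ y ∈ unitCube d,
            eudist (Φ x - x) (Φ y - y) ≤ Δ * |1 - 2 * α| * eudist x y) := by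
  obtain ⟨C, hC⟩ := exists_perm_hasJacobianAt_halfCubes hη (⟨d - 1, by omega⟩ : Fin d)
  refine ⟨√d * C + 1, by positivity, fun α β _ _ hαβ hηα hαη ↦ ?_⟩
  obtain ⟨Φ, hlip, hjac, hself⟩ := hC (2 * α - 1) (abs_le.2 ⟨by linarith, by linarith⟩)
  have hα : 1 + (2 * α - 1) = 2 * α := by ring
  have hβ : 1 - (2 * α - 1) = 2 * β := by linarith
  rw [hα, hβ] at hjac
  refine ⟨Φ, bijOn_unitCube hself, (lipschitzWith_of_sub_id hlip).continuous.continuousOn,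
    fun x hx ↦ hself x (exists_notMem_Ioo_of_mem_frontier_unitCube hx), ?_, ?_,
    fun x _ y _ ↦ (eudist_le_of_lipschitzWith hlip x y).trans ?_⟩
  · refine ae_restrict_exists_hasFDerivWithinAt ((measurableSet_unitCube d).inter
      (measurableSet_le (measurable_pi_apply _) measurable_const)) ?_
    filter_upwards [hjac] with x hx ⟨hcube, hlow⟩ using (hx hcube).1 hlow
  · refine ae_restrict_exists_hasFDerivWithinAt ((measurableSet_unitCube d).inter
      (measurableSet_le measurable_const (measurable_pi_apply _))) ?_
    filter_upwards [hjac] with x hx ⟨hcube, hhigh⟩ using (hx hcube).2 hhigh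
  · have hnorm : (‖2 * α - 1‖₊ : ℝ) = |1 - 2 * α| := abs_sub_comm _ _
    rw [NNReal.coe_mul, hnorm, ← mul_assoc]
    gcongr
    exacts [Real.sqrt_nonneg _, le_add_of_nonneg_right zero_le_one]
end

section
/- Let I ⊆ ℝ be an open interval, let f : I → (0,∞) be differentiable, concave and strictly increasing, let s, t ∈ I with s < t, and let λ ∈ (0,1). Then f((1−λ)·s + λ·t) ≤ (f'(s)/f'(t)) · ((1−λ)·f(s) + λ·f(t)). -/
/-!
By concavity `f ((1 - l) * s + l * t)` is at most the value `f s + f' s * (l * (t - s))` of the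
tangent at `s`, and `f' t * (t - s) ≤ f t - f s`. Writing `f' s` as `(f' s / f' t) * f' t` turns the
tangent bound into `f s + (f' s / f' t) * (l * (f t - f s))`. As the ratio is at least `1` and
`0 ≤ f s`, the summand `f s` may be multiplied by the ratio as well.
-/

open Set Topology

section ConcaveOn

variable {S : Set ℝ} {f : ℝ → ℝ} {x y a b : ℝ}

theorem le_tangent_of_concaveOn_of_hasDerivWithinAt_Ioi (hf : ConcaveOn ℝ S f) (hx : x ∈ S)
    (hy : y ∈ S) (hxy : x ≤ y) (ha : HasDerivWithinAt f a (Ioi x) x) :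
    f y ≤ f x + a * (y - x) := by
  rcases hxy.eq_or_lt with rfl | hlt
  · simp
  · have hslope : slope f x y ≤ a := hf.slope_le_of_hasDerivWithinAt_Ioi hx hy hlt ha
    rw [slope_def_field, div_le_iff₀ (sub_pos.2 hlt)] at hslope
    linarith

theorem mul_sub_le_sub_of_concaveOn_of_hasDerivWithinAt_Iio (hf : ConcaveOn ℝ S f) (hx : x ∈ S)
    (hy : y ∈ S) (hxy : x < y) (hb : HasDerivWithinAt f b (Iio y) y) :
    b * (y - x) ≤ f y - f x := by
  have hslope : b ≤ slope f x y := hf.le_slope_of_hasDerivWithinAt_Iio hx hy hxy hb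
  rwa [slope_def_field, le_div_iff₀ (sub_pos.2 hxy)] at hslope

theorem leftDeriv_le_rightDeriv_of_concaveOn (hf : ConcaveOn ℝ S f) (hx : x ∈ S) (hy : y ∈ S)
    (hxy : x < y) (ha : HasDerivWithinAt f a (Ioi x) x) (hb : HasDerivWithinAt f b (Iio y) y) :
    b ≤ a :=
  (hf.le_slope_of_hasDerivWithinAt_Iio hx hy hxy hb).trans
    (hf.slope_le_of_hasDerivWithinAt_Ioi hx hy hxy ha)

theorem rightDeriv_pos_of_concaveOn_of_strictMonoOn (hf : ConcaveOn ℝ S f)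
    (hmono : StrictMonoOn f S) (hx : x ∈ S) (hS : S ∈ 𝓝[>] x)
    (ha : HasDerivWithinAt f a (Ioi x) x) : 0 < a := by
  obtain ⟨y, hy, hxy⟩ : ∃ y ∈ S, x < y :=
    Filter.nonempty_of_mem (Filter.inter_mem hS self_mem_nhdsWithin)
  exact (hmono.slope_pos hx hy hxy.ne).trans_le
    (hf.slope_le_of_hasDerivWithinAt_Ioi hx hy hxy ha)

end ConcaveOn

theorem stmt_8_general {S : Set ℝ} {f : ℝ → ℝ} {s t a b l : ℝ} (hf : ConcaveOn ℝ S f)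
    (hs : s ∈ S) (ht : t ∈ S) (hst : s < t) (hfs : 0 ≤ f s)
    (ha : HasDerivWithinAt f a (Ioi s) s) (hb : HasDerivWithinAt f b (Iio t) t) (hb₀ : 0 < b)
    (hl₀ : 0 ≤ l) (hl₁ : l ≤ 1) :
    f ((1 - l) * s + l * t) ≤ a / b * ((1 - l) * f s + l * f t) := by
  have hmem : (1 - l) * s + l * t ∈ S := hf.1 hs ht (sub_nonneg.2 hl₁) hl₀ (sub_add_cancel 1 l)
  have hle : s ≤ (1 - l) * s + l * t := by
    linarith [mul_nonneg hl₀ (sub_nonneg.2 hst.le)]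
  have hratio : 1 ≤ a / b :=
    (one_le_div hb₀).2 (leftDeriv_le_rightDeriv_of_concaveOn hf hs ht hst ha hb)
  calc f ((1 - l) * s + l * t)
      ≤ f s + a * ((1 - l) * s + l * t - s) :=
        le_tangent_of_concaveOn_of_hasDerivWithinAt_Ioi hf hs hmem hle ha
    _ = f s + a / b * (l * (b * (t - s))) := by field_simp; ring
    _ ≤ f s + a / b * (l * (f t - f s)) := by
        have : 0 ≤ a / b := zero_le_one.trans hratio
        gcongr
        exact mul_sub_le_sub_of_concaveOn_of_hasDerivWithinAt_Iio hf hs ht hst hb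
    _ ≤ a / b * f s + a / b * (l * (f t - f s)) := by
        gcongr
        exact le_mul_of_one_le_left hfs hratio
    _ = a / b * ((1 - l) * f s + l * f t) := by ring

/-- If `I ⊆ ℝ` is an open interval, `f : I → (0,∞)` is differentiable, concave and
strictly increasing, `s, t ∈ I` with `s < t` and `λ ∈ (0,1)`, then
`f((1-λ)s + λt) ≤ (f'(s)/f'(t)) · ((1-λ)f(s) + λf(t))`. -/
theorem stmt_8 (I : Set ℝ) (hIopen : IsOpen I) (hIconn : I.OrdConnected)
    (f f' : ℝ → ℝ)
    (hpos : ∀ x ∈ I, 0 < f x)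
    (hderiv : ∀ x ∈ I, HasDerivAt f (f' x) x)
    (hconc : ConcaveOn ℝ I f)
    (hmono : StrictMonoOn f I)
    (s t : ℝ) (hs : s ∈ I) (ht : t ∈ I) (hst : s < t)
    (l : ℝ) (hl0 : 0 < l) (hl1 : l < 1) :
    f ((1 - l) * s + l * t) ≤ (f' s / f' t) * ((1 - l) * f s + l * f t) := by
  have hderiv_pos : 0 < f' t :=
    rightDeriv_pos_of_concaveOn_of_strictMonoOn hconc hmono ht
      (mem_nhdsWithin_of_mem_nhds (hIopen.mem_nhds ht)) (hderiv t ht).hasDerivWithinAt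
  exact stmt_8_general hconc hs ht hst (hpos s hs).le (hderiv s hs).hasDerivWithinAt
    (hderiv t ht).hasDerivWithinAt hderiv_pos hl0.le hl1.le
end

section
/- Fix d ∈ ℕ, d ≥ 1. There exists a constant Γ = Γ(d) > 0 with the following property. Let n, m ∈ ℕ with n ≥ 2, and let C, q ∈ ℝ satisfy n/(2·(log₂ n)^q) ≤ m ≤ 2n/(log₂ n)^q, C ≥ 1 + 2^(d+7)/log₂ n, and q ≥ 1 if C^(1/d)·n/m ∉ ℤ while q > 0 suffices if C^(1/d)·n/m ∈ ℤ. Then a uniformly random n^d-element subset S of the grid {1,…,⌊C^(1/d)·n⌋}^d satisfies both: (i) ℙ[ ∃ T ∈ 𝒯_m with |S ∩ (C^(1/d)·n·T)| ≤ (1 − Γ/log₂ n)·n^d/m^d ] ≤ Γ·n^Γ·2^(−(log₂ n)^(qd−2)/Γ), and (ii) ℙ[ ∃ T ∈ 𝒯_m with |S ∩ (C^(1/d)·n·T)| ≥ (1 + Γ/log₂ n)·n^d/m^d ] ≤ Γ·n^Γ·2^(−(log₂ n)^(qd−2)/Γ). -/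
/-- The grid `{1,…,m}^d` (with `m : ℤ`), as a finite type. -/
abbrev gridPt (d : ℕ) (m : ℤ) : Type := Fin d → (Finset.Icc (1 : ℤ) m : Finset ℤ)

/-- The uniform probability of an event `P` on a finite sample space `Ω`:
`ℙ(P) = |{ω : P ω}| / |Ω|`. -/
noncomputable def uniformProb (Ω : Type*) [Fintype Ω] (P : Ω → Prop) : ℝ :=
  (Set.ncard {ω : Ω | P ω} : ℝ) / (Fintype.card Ω : ℝ)

/-!
For a random `k`-subset `S` of a `V`-element set, every binomial moment of `|S ∩ A|` is at most that
of a binomial variable with parameters `k` and `|A| / V`: the moments are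
`E (|S ∩ A| choose j) = (k choose j) (|A| choose j) / (V choose j)`, and
`(|A| choose j) / (V choose j) ≤ (|A| / V) ^ j`. Hence `E t ^ |S ∩ A| ≤ (1 + (|A| / V) (t - 1)) ^ k`
for `t ≥ 1`, and passing to the complement of `A` gives the same for `t < 1`, so Chernoff's bound
holds for both tails. A cube of `s · 𝒯_m` contains a fraction `m ^ (-d) (1 + O(1 / L))` of the grid
`{1, …, ⌊s⌋} ^ d`, since each side contains `s / m + O(1)` integers, and exactly `s / m` when this
is an integer. Taking the exponential parameter `± 1 / L`, with `L = log₂ n`, the probability that a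
given cube is bad is at most `exp (-(n / m) ^ d / L ^ 2)`; it remains to sum over the `m ^ d` cubes.
-/

open Finset

section UniformProb

variable {Ω : Type*} [Fintype Ω]

lemma uniformProb_le_sum_div_card {P : Ω → Prop} {f : Ω → ℝ} (hf : ∀ ω, 0 ≤ f ω)
    (hP : ∀ ω, P ω → 1 ≤ f ω) : uniformProb Ω P ≤ (∑ ω, f ω) / Fintype.card Ω := by
  classical
  have hcount : (Set.ncard {ω | P ω} : ℝ) = ∑ ω with P ω, 1 := by
    rw [Set.ncard_eq_toFinset_card', Set.toFinset_ofPred, sum_const, nsmul_one]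
  unfold uniformProb
  rw [hcount]
  gcongr
  calc ∑ ω with P ω, (1 : ℝ) ≤ ∑ ω with P ω, f ω :=
        sum_le_sum fun ω hω ↦ hP ω (mem_filter.1 hω).2
    _ ≤ ∑ ω, f ω := sum_le_sum_of_subset_of_nonneg (filter_subset _ _) fun ω _ _ ↦ hf ω

lemma uniformProb_mono {P Q : Ω → Prop} (h : ∀ ω, P ω → Q ω) :
    uniformProb Ω P ≤ uniformProb Ω Q := by
  unfold uniformProb
  gcongr with ω
  · exact Set.toFinite _
  · exact h ω

lemma uniformProb_exists_le_sum {ι : Type*} [Fintype ι] (Q : ι → Ω → Prop) :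
    uniformProb Ω (fun ω ↦ ∃ i, Q i ω) ≤ ∑ i, uniformProb Ω (Q i) := by
  classical
  simp only [uniformProb, ← sum_div, Set.ncard_eq_toFinset_card', Set.toFinset_ofPred]
  gcongr
  have hunion : ({ω | ∃ i, Q i ω} : Finset Ω) = univ.biUnion fun i ↦ {ω | Q i ω} := by
    ext ω; simp
  rw [hunion]
  exact_mod_cast card_biUnion_le

end UniformProb

section RandomSubset

lemma choose_mul_pow_le_choose_mul_pow {a b : ℕ} (hab : a ≤ b) (j : ℕ) :
    a.choose j * b ^ j ≤ b.choose j * a ^ j := by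
  have hfactor (i : ℕ) : (a - i) * b ≤ (b - i) * a := by
    rw [Nat.sub_mul, Nat.sub_mul, mul_comm b a]
    exact Nat.sub_le_sub_left (Nat.mul_le_mul_left i hab) _
  have hdesc : a.descFactorial j * b ^ j ≤ b.descFactorial j * a ^ j := by
    simpa only [Nat.descFactorial_eq_prod_range, prod_mul_distrib, prod_const, card_range] using
      prod_le_prod (s := range j) (fun _ _ ↦ zero_le) fun i _ ↦ hfactor i
  rw [Nat.descFactorial_eq_factorial_mul_choose, Nat.descFactorial_eq_factorial_mul_choose,
    mul_assoc, mul_assoc] at hdesc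
  exact Nat.le_of_mul_le_mul_left hdesc j.factorial_pos

variable {α : Type*} [DecidableEq α] {A U : Finset α}

lemma sum_powersetCard_choose_card_inter (hA : A ⊆ U) {j k : ℕ} (hjk : j ≤ k) :
    ∑ S ∈ U.powersetCard k, (#(S ∩ A)).choose j = (#A).choose j * (#U - j).choose (k - j) := by
  calc ∑ S ∈ U.powersetCard k, (#(S ∩ A)).choose j
      = ∑ S ∈ U.powersetCard k, #{J ∈ A.powersetCard j | J ⊆ S} := by
        refine sum_congr rfl fun S _ ↦ ?_
        rw [← card_powersetCard]
        congr 1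
        ext J
        simp only [mem_powersetCard, mem_filter, subset_inter_iff]
        tauto
    _ = ∑ J ∈ A.powersetCard j, #{S ∈ U.powersetCard k | J ⊆ S} := by
        simp only [card_filter]
        exact sum_comm
    _ = ∑ _J ∈ A.powersetCard j, (#U - j).choose (k - j) := by
        refine sum_congr rfl fun J hJ ↦ ?_
        obtain ⟨hJA, rfl⟩ := mem_powersetCard.1 hJ
        exact card_filter_powersetCard_subset J U k (hJA.trans hA) hjk
    _ = (#A).choose j * (#U - j).choose (k - j) := by
        rw [sum_const, card_powersetCard, smul_eq_mul]

lemma sum_powersetCard_choose_card_inter_mul_pow_le (hA : A ⊆ U) {j k : ℕ} (hjk : j ≤ k) :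
    (∑ S ∈ U.powersetCard k, (#(S ∩ A)).choose j) * #U ^ j ≤
      (#U).choose k * k.choose j * #A ^ j := by
  calc (∑ S ∈ U.powersetCard k, (#(S ∩ A)).choose j) * #U ^ j
      = (#A).choose j * #U ^ j * (#U - j).choose (k - j) := by
        rw [sum_powersetCard_choose_card_inter hA hjk, mul_right_comm]
    _ ≤ (#U).choose j * #A ^ j * (#U - j).choose (k - j) :=
        Nat.mul_le_mul_right _ (choose_mul_pow_le_choose_mul_pow (card_le_card hA) j)
    _ = (#U).choose k * k.choose j * #A ^ j := by
        rw [Nat.choose_mul hjk, mul_right_comm]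

lemma one_add_pow_eq_sum_range_choose_mul {R : Type*} [CommSemiring R] (x : R) {c k : ℕ}
    (hck : c ≤ k) : (1 + x) ^ c = ∑ j ∈ range (k + 1), (c.choose j : R) * x ^ j := by
  calc (1 + x) ^ c = ∑ j ∈ range (c + 1), (c.choose j : R) * x ^ j := by
        simp only [add_comm 1 x, add_pow, one_pow, mul_one, mul_comm]
    _ = ∑ j ∈ range (k + 1), (c.choose j : R) * x ^ j := by
        refine sum_subset (range_subset_range.2 (by omega)) fun j _ hj ↦ ?_
        rw [Nat.choose_eq_zero_of_lt (by simpa using hj), Nat.cast_zero, zero_mul]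

lemma sum_powersetCard_one_add_pow_card_inter_le (hA : A ⊆ U) {x : ℝ} (hx : 0 ≤ x) (k : ℕ) :
    ∑ S ∈ U.powersetCard k, (1 + x) ^ #(S ∩ A) ≤ (#U).choose k * (1 + #A / #U * x) ^ k := by
  rcases U.eq_empty_or_nonempty with rfl | hU
  · rw [subset_empty.1 hA]
    simp
  have hmoment (j : ℕ) (hj : j ∈ range (k + 1)) :
      ∑ S ∈ U.powersetCard k, ((#(S ∩ A)).choose j : ℝ) ≤
        (#U).choose k * (k.choose j * (#A / #U) ^ j) := by
    have hU' : (0 : ℝ) < #U ^ j := by have := hU.card_pos; positivity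
    rw [div_pow, ← mul_div_assoc, ← mul_div_assoc, le_div_iff₀ hU', ← mul_assoc]
    exact_mod_cast sum_powersetCard_choose_card_inter_mul_pow_le hA
      (Nat.lt_succ_iff.1 (mem_range.1 hj))
  calc ∑ S ∈ U.powersetCard k, (1 + x) ^ #(S ∩ A)
      = ∑ S ∈ U.powersetCard k, ∑ j ∈ range (k + 1), ((#(S ∩ A)).choose j : ℝ) * x ^ j := by
        refine sum_congr rfl fun S hS ↦ one_add_pow_eq_sum_range_choose_mul x ?_
        exact (card_le_card inter_subset_left).trans_eq (mem_powersetCard.1 hS).2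
    _ = ∑ j ∈ range (k + 1), (∑ S ∈ U.powersetCard k, ((#(S ∩ A)).choose j : ℝ)) * x ^ j := by
        simp only [sum_mul]
        exact sum_comm
    _ ≤ ∑ j ∈ range (k + 1), (#U).choose k * (k.choose j * (#A / #U) ^ j) * x ^ j := by
        gcongr with j hj
        exact hmoment j hj
    _ = (#U).choose k * (1 + #A / #U * x) ^ k := by
        rw [one_add_pow_eq_sum_range_choose_mul _ le_rfl, mul_sum]
        refine sum_congr rfl fun j _ ↦ ?_
        rw [mul_pow, mul_assoc, mul_assoc]

lemma sum_powersetCard_pow_card_inter_le (hA : A ⊆ U) {t : ℝ} (ht : 0 < t) (k : ℕ) :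
    ∑ S ∈ U.powersetCard k, t ^ #(S ∩ A) ≤ (#U).choose k * (1 + #A / #U * (t - 1)) ^ k := by
  rcases le_total 1 t with ht1 | ht1
  · simpa using sum_powersetCard_one_add_pow_card_inter_le hA (sub_nonneg.2 ht1) k
  rcases U.eq_empty_or_nonempty with rfl | hU
  · rw [subset_empty.1 hA]
    simp
  have hx : 0 ≤ t⁻¹ - 1 := sub_nonneg.2 ((one_le_inv₀ ht).2 ht1)
  have hcompl (S : Finset α) (hS : S ∈ U.powersetCard k) :
      t ^ #(S ∩ A) = t ^ k * (1 + (t⁻¹ - 1)) ^ #(S ∩ (U \ A)) := by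
    obtain ⟨hSU, rfl⟩ := mem_powersetCard.1 hS
    have hsplit : #S = #(S ∩ A) + #(S ∩ (U \ A)) := by
      rw [← inter_sdiff_assoc, inter_eq_left.2 hSU, card_inter_add_card_sdiff]
    rw [hsplit, add_sub_cancel, pow_add, mul_assoc, ← mul_pow, mul_inv_cancel₀ ht.ne', one_pow,
      mul_one]
  have hcard : (#(U \ A) : ℝ) = #U - #A := cast_card_sdiff hA
  have hU' : (#U : ℝ) ≠ 0 := by exact_mod_cast hU.card_pos.ne'
  rw [sum_congr rfl hcompl, ← mul_sum]
  calc t ^ k * ∑ S ∈ U.powersetCard k, (1 + (t⁻¹ - 1)) ^ #(S ∩ (U \ A))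
      ≤ t ^ k * ((#U).choose k * (1 + #(U \ A) / #U * (t⁻¹ - 1)) ^ k) := by
        gcongr
        exact sum_powersetCard_one_add_pow_card_inter_le sdiff_subset hx k
    _ = (#U).choose k * (t * (1 + #(U \ A) / #U * (t⁻¹ - 1))) ^ k := by
        rw [mul_pow]; ring
    _ = (#U).choose k * (1 + #A / #U * (t - 1)) ^ k := by
        rw [hcard]
        congr 2
        field_simp
        ring

-- The sign of `l` selects the tail: lower for `l < 0`, upper for `l > 0`.
lemma uniformProb_mul_le_mul_card_inter_le_exp [Fintype α] (A : Finset α) (k : ℕ) (l b : ℝ) :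
    uniformProb {S : Finset α // #S = k} (fun S ↦ l * b ≤ l * #(S.1 ∩ A)) ≤
      Real.exp (#A * k / Fintype.card α * (Real.exp l - 1) - l * b) := by
  set V := Fintype.card α
  set r : ℝ := #A / V * (Real.exp l - 1) with hr
  have hr1 : 0 ≤ 1 + r := by
    have hA : (#A : ℝ) / V ≤ 1 := div_le_one_of_le₀ (mod_cast card_le_univ A) (by positivity)
    have hA0 : (0 : ℝ) ≤ #A / V := by positivity
    nlinarith [Real.exp_pos l]
  have hmgf : ∑ S : {S : Finset α // #S = k}, Real.exp l ^ #(S.1 ∩ A) ≤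
      V.choose k * (1 + r) ^ k := by
    rw [← sum_subtype (univ.powersetCard k) (by simp) fun S ↦ Real.exp l ^ #(S ∩ A)]
    exact sum_powersetCard_pow_card_inter_le (subset_univ A) (Real.exp_pos l) k
  calc uniformProb {S : Finset α // #S = k} (fun S ↦ l * b ≤ l * #(S.1 ∩ A))
      ≤ (∑ S : {S : Finset α // #S = k}, Real.exp (l * #(S.1 ∩ A) - l * b)) /
          Fintype.card {S : Finset α // #S = k} :=
        uniformProb_le_sum_div_card (fun S ↦ (Real.exp_pos _).le)
          fun S hS ↦ Real.one_le_exp (sub_nonneg.2 hS)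
    _ = (∑ S : {S : Finset α // #S = k}, Real.exp l ^ #(S.1 ∩ A)) / Real.exp (l * b) /
          V.choose k := by
        simp only [Real.exp_sub, ← sum_div, mul_comm l (#_ : ℝ), Real.exp_nat_mul,
          Fintype.card_finset_len, V]
    _ ≤ (1 + r) ^ k / Real.exp (l * b) := by
        refine div_le_of_le_mul₀ (by positivity) (by positivity) ?_
        rw [div_mul_eq_mul_div, mul_comm ((1 + r) ^ k)]
        gcongr
    _ ≤ Real.exp r ^ k / Real.exp (l * b) := by
        gcongr
        rw [add_comm]
        exact Real.add_one_le_exp r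
    _ = Real.exp (#A * k / V * (Real.exp l - 1) - l * b) := by
        rw [← Real.exp_nat_mul, ← Real.exp_sub, hr]
        congr 2
        ring

end RandomSubset

section RealEstimates

lemma mul_exp_sub_one_sub_le_neg_mul_sq {μ M κ Γ l : ℝ} (hμ : 0 ≤ μ) (hM : 0 ≤ M) (hκ : 0 ≤ κ)
    (hl : |l| ≤ 1) (hΓ : 2 + 2 * κ ≤ Γ) (hμM : |μ - M| ≤ κ * |l| * M) :
    μ * (Real.exp l - 1) - l * ((1 + Γ * l) * M) ≤ -(M * l ^ 2) := by
  have hexp : Real.exp l - 1 ≤ l + l ^ 2 := by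
    linarith [(abs_le.1 (Real.abs_exp_sub_one_sub_id_le hl)).2]
  have hfactor : |l + l ^ 2| ≤ 2 * |l| := by
    calc |l + l ^ 2| ≤ |l| + |l| * |l| := by
          rw [← abs_mul, ← sq]
          exact abs_add_le l (l ^ 2)
      _ ≤ 2 * |l| := by nlinarith [abs_nonneg l]
  have herr : (μ - M) * (l + l ^ 2) ≤ 2 * κ * M * l ^ 2 := by
    calc (μ - M) * (l + l ^ 2) ≤ |μ - M| * |l + l ^ 2| := by
          rw [← abs_mul]
          exact le_abs_self _
      _ ≤ κ * |l| * M * (2 * |l|) := by gcongr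
      _ = 2 * κ * M * l ^ 2 := by
          rw [← sq_abs l]
          ring
  calc μ * (Real.exp l - 1) - l * ((1 + Γ * l) * M)
      ≤ μ * (l + l ^ 2) - l * ((1 + Γ * l) * M) := by gcongr
    _ = (μ - M) * (l + l ^ 2) + (1 - Γ) * (M * l ^ 2) := by ring
    _ ≤ 2 * κ * M * l ^ 2 + (1 - Γ) * (M * l ^ 2) := by gcongr
    _ = (2 + 2 * κ - Γ) * (M * l ^ 2) - M * l ^ 2 := by ring
    _ ≤ -(M * l ^ 2) := by
        have := mul_nonneg (sub_nonneg.2 hΓ) (mul_nonneg hM (sq_nonneg l))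
        linarith

lemma exp_mul_sub_one_le_mul {u : ℝ} (hu0 : 0 ≤ u) (hu1 : u ≤ 1) (x : ℝ) :
    Real.exp (u * x) - 1 ≤ u * (Real.exp x - 1) := by
  have hconv := convexOn_exp.2 (Set.mem_univ x) (Set.mem_univ 0) hu0 (sub_nonneg.2 hu1)
    (add_sub_cancel u 1)
  simp only [smul_eq_mul, mul_zero, add_zero, Real.exp_zero, mul_one] at hconv
  linarith

lemma abs_prod_sub_one_le_exp_mul {ι : Type*} {t : Finset ι} {ρ : ι → ℝ} {c u : ℝ} (hu0 : 0 ≤ u)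
    (hu1 : u ≤ 1) (hρ : ∀ i ∈ t, |ρ i - 1| ≤ c * u) :
    |∏ i ∈ t, ρ i - 1| ≤ Real.exp (#t * c) * u := by
  calc |∏ i ∈ t, ρ i - 1| ≤ Real.exp (∑ i ∈ t, |ρ i - 1|) - 1 := by
        simpa using t.norm_prod_one_add_sub_one_le fun i ↦ ρ i - 1
    _ ≤ Real.exp (u * (#t * c)) - 1 := by
        gcongr
        refine (sum_le_card_nsmul t _ _ hρ).trans_eq ?_
        rw [nsmul_eq_mul]
        ring
    _ ≤ u * (Real.exp (#t * c) - 1) := exp_mul_sub_one_le_mul hu0 hu1 _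
    _ ≤ Real.exp (#t * c) * u := by linarith

lemma exp_neg_le_two_rpow_neg {x y : ℝ} (hx : 0 ≤ x) (hxy : x ≤ y) :
    Real.exp (-y) ≤ (2 : ℝ) ^ (-x) := by
  rw [Real.rpow_def_of_pos two_pos, mul_neg]
  have hlog : Real.log 2 * x ≤ 1 * x := by
    gcongr
    linarith [Real.log_two_lt_d9]
  gcongr
  linarith

lemma pow_le_mul_rpow {d : ℕ} {x y Γ : ℝ} (hx : 0 ≤ x) (hy : 1 ≤ y) (hxy : x ≤ 2 * y)
    (hΓ2 : 2 ^ d ≤ Γ) (hΓd : d ≤ Γ) : x ^ d ≤ Γ * y ^ Γ := by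
  have hΓ0 : 0 ≤ Γ := d.cast_nonneg.trans hΓd
  calc x ^ d ≤ (2 * y) ^ d := by gcongr
    _ = 2 ^ d * y ^ (d : ℝ) := by rw [mul_pow, Real.rpow_natCast]
    _ ≤ Γ * y ^ Γ := by gcongr

lemma rpow_mul_sub_two_div_two_pow_le {x y L q : ℝ} (d : ℕ) (hL : 0 < L) (hx : 0 < x)
    (hxy : x ≤ 2 * y / L ^ q) :
    L ^ (q * d - 2) / 2 ^ d ≤ y ^ d / x ^ d * L⁻¹ ^ 2 := by
  have hratio : L ^ q / 2 ≤ y / x := by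
    rw [le_div_iff₀ (by positivity)] at hxy
    rw [div_le_div_iff₀ two_pos hx]
    linarith
  calc L ^ (q * d - 2) / 2 ^ d = (L ^ q / 2) ^ d * L⁻¹ ^ 2 := by
        rw [Real.rpow_sub hL, Real.rpow_mul hL.le, Real.rpow_natCast, Real.rpow_two, div_pow]
        ring
    _ ≤ (y / x) ^ d * L⁻¹ ^ 2 := by gcongr
    _ = y ^ d / x ^ d * L⁻¹ ^ 2 := by rw [div_pow]

lemma pow_mul_exp_neg_le_mul_two_rpow {d : ℕ} {x y L q Γ : ℝ} (hL : 1 ≤ L) (hx : 0 < x)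
    (hy : 1 ≤ y) (hxy : x ≤ 2 * y / L ^ q) (hq : 0 ≤ q) (hΓ2 : 2 ^ d ≤ Γ) (hΓd : d ≤ Γ) :
    x ^ d * Real.exp (-(y ^ d / x ^ d * L⁻¹ ^ 2)) ≤
      Γ * y ^ Γ * (2 : ℝ) ^ (-(L ^ (q * d - 2)) / Γ) := by
  have hL0 : 0 < L := zero_lt_one.trans_le hL
  have hΓ0 : 0 ≤ Γ := d.cast_nonneg.trans hΓd
  have hx2y : x ≤ 2 * y := hxy.trans (div_le_self (by positivity) (Real.one_le_rpow hL hq))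
  have hexponent : L ^ (q * d - 2) / Γ ≤ y ^ d / x ^ d * L⁻¹ ^ 2 :=
    (div_le_div_of_nonneg_left (by positivity) (by positivity) hΓ2).trans
      (rpow_mul_sub_two_div_two_pow_le d hL0 hx hxy)
  rw [neg_div]
  gcongr
  · exact pow_le_mul_rpow hx.le hy hx2y hΓ2 hΓd
  · exact exp_neg_le_two_rpow_neg (by positivity) hexponent

lemma two_pow_le_exp_mul_three (d : ℕ) : (2 : ℝ) ^ d ≤ Real.exp (d * 3) := by
  rw [Real.exp_nat_mul]
  gcongr
  linarith [Real.add_one_le_exp 3]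

lemma one_le_logb_two {x : ℝ} (hx : 2 ≤ x) : 1 ≤ Real.logb 2 x := by
  rw [Real.le_logb_iff_rpow_le one_lt_two (by linarith), Real.rpow_one]
  exact hx

lemma logb_two_natCast_le (n : ℕ) : Real.logb 2 n ≤ n := by
  rcases n.eq_zero_or_pos with rfl | hn
  · simp
  rw [Real.logb_le_iff_le_rpow one_lt_two (by exact_mod_cast hn), Real.rpow_natCast]
  exact_mod_cast Nat.lt_two_pow_self.le

end RealEstimates

section Grid

/-- The points of `{1, …, ⌊s⌋}` in the `j`-th (counting from `0`) of the `m` half-open intervals of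
length `s / m` into which `(0, s]` is divided: one coordinate of a cube of `s · 𝒯_m`. -/
noncomputable def gridInterval (s : ℝ) (m j : ℕ) : Finset (Icc (1 : ℤ) ⌊s⌋) :=
  {x | s * j / m < ((x : ℤ) : ℝ) ∧ ((x : ℤ) : ℝ) ≤ s * (j + 1) / m}

/-- The grid points of `{1, …, ⌊s⌋}^d` in the cube `s · T`, where `T ∈ 𝒯_m` is the cube with lower
corner `p / m`. -/
noncomputable def gridCube (s : ℝ) {d m : ℕ} (p : Fin d → Fin m) : Finset (gridPt d ⌊s⌋) :=
  Fintype.piFinset fun i ↦ gridInterval s m (p i)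

lemma ncard_setOf_mem_gridCube (s : ℝ) {d m : ℕ} (p : Fin d → Fin m)
    (S : Finset (gridPt d ⌊s⌋)) :
    Set.ncard {x | x ∈ S ∧ ∀ i, s * (p i : ℕ) / m < ((x i : ℤ) : ℝ) ∧
      ((x i : ℤ) : ℝ) ≤ s * ((p i : ℕ) + 1) / m} = #(S ∩ gridCube s p) := by
  rw [← Set.ncard_coe_finset]
  congr 1
  ext x
  simp [gridCube, gridInterval]

variable {s : ℝ} {m j : ℕ}

lemma card_gridInterval (hs : 0 ≤ s) (hj : j < m) :
    (#(gridInterval s m j) : ℝ) = ⌊s * (j + 1) / m⌋ - ⌊s * j / m⌋ := by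
  have hm : (0 : ℝ) < m := by exact_mod_cast j.zero_le.trans_lt hj
  have hmono : ⌊s * j / m⌋ ≤ ⌊s * (j + 1) / m⌋ := by
    gcongr
    linarith
  have hmap : (gridInterval s m j).map (Function.Embedding.subtype _) =
      Ioc ⌊s * j / m⌋ ⌊s * (j + 1) / m⌋ := by
    ext x
    simp only [gridInterval, mem_map, mem_filter, mem_univ, true_and, mem_Ioc, mem_Icc,
      Function.Embedding.subtype_apply, Subtype.exists, exists_and_right, exists_eq_right,
      Int.floor_lt, Int.le_floor, exists_prop]
    rw [and_assoc, and_iff_right_iff_imp]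
    rintro ⟨hlow, hupp⟩
    constructor
    · have : (0 : ℝ) < x := lt_of_le_of_lt (by positivity) hlow
      exact_mod_cast this
    · refine hupp.trans ((div_le_iff₀ hm).2 ?_)
      gcongr
      exact_mod_cast hj
  rw [← card_map, hmap, Int.card_Ioc]
  exact_mod_cast Int.toNat_of_nonneg (sub_nonneg.2 hmono)

lemma abs_card_gridInterval_mul_sub_floor_le (hs : 0 ≤ s) (hj : j < m) :
    |#(gridInterval s m j) * m - (⌊s⌋ : ℝ)| ≤ m + 1 := by
  have hm : (0 : ℝ) < m := by exact_mod_cast j.zero_le.trans_lt hj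
  have hwidth : |#(gridInterval s m j) - s / m| ≤ 1 := by
    rw [card_gridInterval hs hj, abs_le]
    have hsplit : s * (j + 1) / m = s * j / m + s / m := by ring
    constructor <;>
      linarith [Int.floor_le (s * (j + 1) / m), Int.lt_floor_add_one (s * (j + 1) / m),
        Int.floor_le (s * j / m), Int.lt_floor_add_one (s * j / m)]
  calc |#(gridInterval s m j) * m - (⌊s⌋ : ℝ)|
      = |(#(gridInterval s m j) - s / m) * m + Int.fract s| := by
        rw [sub_mul, div_mul_cancel₀ s hm.ne', Int.fract]
        ring_nf
    _ ≤ |#(gridInterval s m j) - s / m| * m + Int.fract s := by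
        refine (abs_add_le _ _).trans_eq ?_
        rw [abs_mul, abs_of_pos hm, abs_of_nonneg (Int.fract_nonneg s)]
    _ ≤ 1 * m + 1 := by
        gcongr
        exact (Int.fract_lt_one s).le
    _ = m + 1 := by rw [one_mul]

lemma card_gridInterval_mul_of_div_eq_intCast (hs : 0 ≤ s) (hj : j < m) {z : ℤ}
    (hz : s / m = z) : (#(gridInterval s m j) * m : ℝ) = ⌊s⌋ := by
  have hm : (m : ℝ) ≠ 0 := by exact_mod_cast (j.zero_le.trans_lt hj).ne'
  have hs_eq : s = (z * m : ℤ) := by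
    push_cast
    exact (div_eq_iff hm).1 hz
  have hsplit : s * (j + 1) / m = s * j / m + z := by rw [← hz]; ring
  have hcard : (#(gridInterval s m j) : ℝ) = z := by
    rw [card_gridInterval hs hj, hsplit, Int.floor_add_intCast]
    push_cast
    ring
  rw [hcard, hs_eq, Int.floor_intCast]
  push_cast
  rfl

variable {d : ℕ}

lemma card_gridPt {N : ℤ} (hN : 0 ≤ N) : (Fintype.card (gridPt d N) : ℝ) = (N : ℝ) ^ d := by
  have hcast : ((N.toNat : ℕ) : ℝ) = N := by exact_mod_cast Int.toNat_of_nonneg hN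
  simp [gridPt, hcast]

lemma abs_card_gridCube_mul_div_sub_one_le {c u : ℝ} (hc : 0 ≤ c) (hu0 : 0 ≤ u) (hu1 : u ≤ 1)
    (hs : 1 ≤ s) (hround : (¬ ∃ z : ℤ, s / m = z) → (m + 1 : ℝ) ≤ c * u * ⌊s⌋)
    (p : Fin d → Fin m) :
    |#(gridCube s p) * (m : ℝ) ^ d / (⌊s⌋ : ℝ) ^ d - 1| ≤ Real.exp (d * c) * u := by
  have hs0 : 0 ≤ s := zero_le_one.trans hs
  have hfloor : (0 : ℝ) < ⌊s⌋ := by exact_mod_cast Int.floor_pos.2 hs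
  have hcoord (i : Fin d) :
      |#(gridInterval s m (p i)) * (m : ℝ) / ⌊s⌋ - 1| ≤ c * u := by
    rw [div_sub_one hfloor.ne', abs_div, abs_of_pos hfloor, div_le_iff₀ hfloor]
    by_cases hz : ∃ z : ℤ, s / m = z
    · obtain ⟨z, hz⟩ := hz
      rw [card_gridInterval_mul_of_div_eq_intCast hs0 (p i).2 hz, sub_self, abs_zero]
      positivity
    · exact (abs_card_gridInterval_mul_sub_floor_le hs0 (p i).2).trans (hround hz)
  have hprod : #(gridCube s p) * (m : ℝ) ^ d / (⌊s⌋ : ℝ) ^ d =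
      ∏ i, #(gridInterval s m (p i)) * (m : ℝ) / ⌊s⌋ := by
    simp [gridCube, Fintype.card_piFinset, prod_div_distrib, prod_mul_distrib]
  rw [hprod]
  simpa using abs_prod_sub_one_le_exp_mul (t := univ) hu0 hu1 fun i _ ↦ hcoord i

lemma uniformProb_exists_gridCube_le {n : ℕ} {c l Γ : ℝ} (hc : 0 ≤ c) (hl : |l| ≤ 1)
    (hΓ : 2 + 2 * Real.exp (d * c) ≤ Γ) (hm : 1 ≤ m) (hs : 1 ≤ s)
    (hround : (¬ ∃ z : ℤ, s / m = z) → (m + 1 : ℝ) ≤ c * |l| * ⌊s⌋) :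
    uniformProb {S : Finset (gridPt d ⌊s⌋) // #S = n ^ d} (fun S ↦ ∃ p : Fin d → Fin m,
        l * ((1 + Γ * l) * (n ^ d / m ^ d)) ≤ l * #(S.1 ∩ gridCube s p)) ≤
      m ^ d * Real.exp (-((n : ℝ) ^ d / m ^ d * l ^ 2)) := by
  have : (0 : ℝ) < m := by exact_mod_cast hm
  set M : ℝ := n ^ d / m ^ d with hM
  have hfloor : 0 < ⌊s⌋ := Int.floor_pos.2 hs
  have hmean (p : Fin d → Fin m) :
      |#(gridCube s p) * (n ^ d : ℕ) / Fintype.card (gridPt d ⌊s⌋) - M| ≤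
        Real.exp (d * c) * |l| * M := by
    have hratio : #(gridCube s p) * (n ^ d : ℕ) / (Fintype.card (gridPt d ⌊s⌋) : ℝ) - M =
        (#(gridCube s p) * (m : ℝ) ^ d / (⌊s⌋ : ℝ) ^ d - 1) * M := by
      rw [card_gridPt hfloor.le, hM]
      push_cast
      field_simp
    rw [hratio, abs_mul, abs_of_nonneg (show 0 ≤ M by positivity)]
    gcongr
    exact abs_card_gridCube_mul_div_sub_one_le hc (abs_nonneg l) hl hs hround p
  have hcube (p : Fin d → Fin m) :
      uniformProb {S : Finset (gridPt d ⌊s⌋) // #S = n ^ d}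
        (fun S ↦ l * ((1 + Γ * l) * M) ≤ l * #(S.1 ∩ gridCube s p)) ≤
      Real.exp (-(M * l ^ 2)) :=
    (uniformProb_mul_le_mul_card_inter_le_exp _ _ _ _).trans <| Real.exp_le_exp.2 <|
      mul_exp_sub_one_sub_le_neg_mul_sq (by positivity) (by positivity) (Real.exp_pos _).le hl hΓ
        (hmean p)
  calc _ ≤ ∑ p : Fin d → Fin m, uniformProb {S : Finset (gridPt d ⌊s⌋) // #S = n ^ d}
        (fun S ↦ l * ((1 + Γ * l) * M) ≤ l * #(S.1 ∩ gridCube s p)) := uniformProb_exists_le_sum _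
    _ ≤ ∑ _p : Fin d → Fin m, Real.exp (-(M * l ^ 2)) := sum_le_sum fun p _ ↦ hcube p
    _ = m ^ d * Real.exp (-(M * l ^ 2)) := by simp

lemma add_one_le_three_mul_inv_mul_floor {n : ℕ} {L q : ℝ} (hL : 1 ≤ L) (hLn : L ≤ n)
    (hns : n ≤ s) (hmn : (m : ℝ) ≤ 2 * n / L ^ q) (hq : 1 ≤ q) :
    (m + 1 : ℝ) ≤ 3 * L⁻¹ * ⌊s⌋ := by
  have hL0 : 0 < L := zero_lt_one.trans_le hL
  have hLq : L ≤ L ^ q := by simpa using Real.rpow_le_rpow_of_exponent_le hL hq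
  have hfloor : (n : ℝ) ≤ ⌊s⌋ := by
    exact_mod_cast Int.le_floor.2 (show ((n : ℤ) : ℝ) ≤ s by exact_mod_cast hns)
  calc (m + 1 : ℝ) ≤ 2 * n / L + n / L := by
        gcongr
        · exact hmn.trans (by gcongr)
        · exact (one_le_div hL0).2 hLn
    _ = 3 * L⁻¹ * n := by ring
    _ ≤ 3 * L⁻¹ * ⌊s⌋ := by gcongr

lemma uniformProb_exists_gridCube_le_rpow {n : ℕ} {l L q Γ : ℝ} (hL : 1 ≤ L) (hLn : L ≤ n)
    (hm : 1 ≤ m) (hns : n ≤ s) (hmn : (m : ℝ) ≤ 2 * n / L ^ q) (hq : 0 ≤ q)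
    (hround : (¬ ∃ z : ℤ, s / m = z) → 1 ≤ q) (hl : |l| = L⁻¹)
    (hΓ : 2 + 2 * Real.exp (d * 3) ≤ Γ) :
    uniformProb {S : Finset (gridPt d ⌊s⌋) // #S = n ^ d} (fun S ↦ ∃ p : Fin d → Fin m,
        l * ((1 + Γ * l) * (n ^ d / m ^ d)) ≤ l * #(S.1 ∩ gridCube s p)) ≤
      Γ * (n : ℝ) ^ Γ * (2 : ℝ) ^ (-(L ^ (q * d - 2)) / Γ) := by
  have hn : (1 : ℝ) ≤ n := hL.trans hLn
  have hexp : Real.exp (d * 3) ≤ Γ := by linarith [Real.exp_pos (d * 3)]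
  have hΓd : (d : ℝ) ≤ Γ := by linarith [Real.add_one_le_exp (d * 3 : ℝ), d.cast_nonneg (α := ℝ)]
  calc uniformProb {S : Finset (gridPt d ⌊s⌋) // #S = n ^ d} (fun S ↦ ∃ p : Fin d → Fin m,
        l * ((1 + Γ * l) * (n ^ d / m ^ d)) ≤ l * #(S.1 ∩ gridCube s p))
      ≤ m ^ d * Real.exp (-((n : ℝ) ^ d / m ^ d * l ^ 2)) := by
        refine uniformProb_exists_gridCube_le zero_le_three ?_ hΓ hm (hn.trans hns) fun hz ↦ ?_
        · exact hl.trans_le (inv_le_one_of_one_le₀ hL)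
        · exact hl ▸ add_one_le_three_mul_inv_mul_floor hL hLn hns hmn (hround hz)
    _ ≤ Γ * (n : ℝ) ^ Γ * (2 : ℝ) ^ (-(L ^ (q * d - 2)) / Γ) := by
        rw [← sq_abs, hl]
        exact pow_mul_exp_neg_le_mul_two_rpow hL (mod_cast hm) hn hmn hq
          ((two_pow_le_exp_mul_three d).trans hexp) hΓd

end Grid

theorem stmt_10_general (d : ℕ) :
    ∃ Γ : ℝ, 0 < Γ ∧
      ∀ (n m : ℕ) (s L q : ℝ), 1 ≤ L → L ≤ n → 1 ≤ m → n ≤ s →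
        (m : ℝ) ≤ 2 * n / L ^ q →
        0 ≤ q →
        ((¬ ∃ z : ℤ, s / m = (z : ℝ)) → 1 ≤ q) →
        uniformProb {S : Finset (gridPt d ⌊s⌋) // #S = n ^ d}
            (fun S ↦ ∃ p : Fin d → Fin m,
              (#(S.1 ∩ gridCube s p) : ℝ) ≤ (1 - Γ / L) * n ^ d / m ^ d) ≤
          Γ * (n : ℝ) ^ Γ * (2 : ℝ) ^ (-(L ^ (q * d - 2)) / Γ) ∧
        uniformProb {S : Finset (gridPt d ⌊s⌋) // #S = n ^ d}
            (fun S ↦ ∃ p : Fin d → Fin m,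
              (1 + Γ / L) * n ^ d / m ^ d ≤ (#(S.1 ∩ gridCube s p) : ℝ)) ≤
          Γ * (n : ℝ) ^ Γ * (2 : ℝ) ^ (-(L ^ (q * d - 2)) / Γ) := by
  refine ⟨2 + 2 * Real.exp (d * 3), by positivity, ?_⟩
  intro n m s L q hL hLn hm hns hmn hq hround
  have hu : 0 ≤ L⁻¹ := inv_nonneg.2 (zero_le_one.trans hL)
  have htail (l : ℝ) (hl : |l| = L⁻¹) :=
    uniformProb_exists_gridCube_le_rpow (d := d) hL hLn hm hns hmn hq hround hl le_rfl
  constructor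
  · refine (uniformProb_mono fun S ⟨p, hp⟩ ↦ ⟨p, ?_⟩).trans
      (htail (-L⁻¹) (by rw [abs_neg, abs_of_nonneg hu]))
    rw [mul_div_assoc, sub_eq_add_neg, div_eq_mul_inv _ L, ← mul_neg] at hp
    exact mul_le_mul_of_nonpos_left hp (neg_nonpos.2 hu)
  · refine (uniformProb_mono fun S ⟨p, hp⟩ ↦ ⟨p, ?_⟩).trans (htail L⁻¹ (abs_of_nonneg hu))
    rw [mul_div_assoc, div_eq_mul_inv _ L] at hp
    exact mul_le_mul_of_nonneg_left hp hu

/-- With probability at least `1 − Γ·n^Γ·2^(−(log₂ n)^(qd−2)/Γ)`, a uniformly random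
`n^d`-element subset of the grid `{1,…,⌊C^(1/d)n⌋}^d` has, in every cube of the
rescaled dyadic partition `C^(1/d)·n·𝒯_m`, a number of points within a
`(1 ± Γ/log₂ n)` factor of the average `n^d/m^d`. -/
theorem stmt_10 (d : ℕ) (hd : 1 ≤ d) :
    ∃ Γ : ℝ, 0 < Γ ∧
      ∀ (n m : ℕ) (C q : ℝ), 2 ≤ n → 1 ≤ m →
        (n : ℝ) / (2 * Real.logb 2 n ^ q) ≤ (m : ℝ) →
        (m : ℝ) ≤ 2 * n / Real.logb 2 n ^ q →
        1 + 2 ^ (d + 7) / Real.logb 2 n ≤ C →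
        0 < q →
        ((¬ ∃ z : ℤ, C ^ ((d : ℝ)⁻¹) * n / m = (z : ℝ)) → 1 ≤ q) →
        uniformProb {S : Finset (gridPt d ⌊C ^ ((d : ℝ)⁻¹) * n⌋) // S.card = n ^ d}
            (fun S => ∃ p : Fin d → Fin m,
              (Set.ncard {x | x ∈ S.1 ∧ ∀ i,
                  C ^ ((d : ℝ)⁻¹) * n * (p i : ℕ) / m < ((x i : ℤ) : ℝ) ∧
                  ((x i : ℤ) : ℝ) ≤ C ^ ((d : ℝ)⁻¹) * n * ((p i : ℕ) + 1) / m} : ℝ) ≤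
                (1 - Γ / Real.logb 2 n) * n ^ d / m ^ d) ≤
          Γ * (n : ℝ) ^ Γ * (2 : ℝ) ^ (-(Real.logb 2 n ^ (q * d - 2)) / Γ) ∧
        uniformProb {S : Finset (gridPt d ⌊C ^ ((d : ℝ)⁻¹) * n⌋) // S.card = n ^ d}
            (fun S => ∃ p : Fin d → Fin m,
              (1 + Γ / Real.logb 2 n) * n ^ d / m ^ d ≤
                (Set.ncard {x | x ∈ S.1 ∧ ∀ i,
                  C ^ ((d : ℝ)⁻¹) * n * (p i : ℕ) / m < ((x i : ℤ) : ℝ) ∧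
                  ((x i : ℤ) : ℝ) ≤ C ^ ((d : ℝ)⁻¹) * n * ((p i : ℕ) + 1) / m} : ℝ)) ≤
          Γ * (n : ℝ) ^ Γ * (2 : ℝ) ^ (-(Real.logb 2 n ^ (q * d - 2)) / Γ) := by
  obtain ⟨Γ, hΓ, hbound⟩ := stmt_10_general d
  refine ⟨Γ, hΓ, fun n m C q hn hm _ hmn hC hq hround ↦ ?_⟩
  have hL : 1 ≤ Real.logb 2 n := one_le_logb_two (mod_cast hn)
  have hC1 : 1 ≤ C := le_trans (le_add_of_nonneg_right (by positivity)) hC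
  have hns : (n : ℝ) ≤ C ^ ((d : ℝ)⁻¹) * n :=
    le_mul_of_one_le_left n.cast_nonneg (Real.one_le_rpow hC1 (by positivity))
  simpa only [ncard_setOf_mem_gridCube] using
    hbound n m _ _ q hL (logb_two_natCast_le n) hm hns hmn hq.le hround
end

section
/- Fix d ∈ ℕ, d ≥ 1. For every n ∈ ℕ with n ≥ 1 and every set S ⊆ ℤ^d with |S| = n^d, there exists an injective map f : S → {1,…,n^d}^d that is 1-Lipschitz with respect to the Euclidean metric, i.e., ‖f(x) − f(y)‖₂ ≤ ‖x − y‖₂ for all x, y ∈ S. -/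
/-- Euclidean distance between two points of the integer lattice `ℤ^d`. -/
noncomputable def zdist {d : ℕ} (x y : Fin d → ℤ) : ℝ :=
  Real.sqrt (∑ i, ((x i : ℝ) - (y i : ℝ)) ^ 2)

/-!
Compress each coordinate separately: replace `x i` by its rank among the values that the `i`-th
coordinate takes on `S`. On `ℤ` the rank in a finite set is `1`-Lipschitz, since at most `b - a`
elements of the set lie in `(a, b]`, and it is strictly increasing on the set itself.
-/

open Finset

section Rank

variable {α : Type*} [LinearOrder α]

/-- The rank of `a` relative to `A`: the number of elements of `A` that are at most `a`. The least
element of `A` has rank `1`, and `a` need not belong to `A`. -/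
def rankIn (A : Finset α) (a : α) : ℕ := #{z ∈ A | z ≤ a}

theorem rankIn_le_card (A : Finset α) (a : α) : rankIn A a ≤ #A :=
  card_filter_le _ _

theorem rankIn_pos {A : Finset α} {a : α} (ha : a ∈ A) : 0 < rankIn A a :=
  card_pos.2 ⟨a, mem_filter.2 ⟨ha, le_rfl⟩⟩

theorem rankIn_monotone (A : Finset α) : Monotone (rankIn A) :=
  fun _ _ hab ↦ card_le_card (monotone_filter_right A fun _ _ hz ↦ hz.trans hab)

theorem rankIn_strictMonoOn (A : Finset α) : StrictMonoOn (rankIn A) A := by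
  intro a _ b hb hab
  refine card_lt_card ((ssubset_iff_of_subset ?_).2 ⟨b, ?_, ?_⟩)
  · exact monotone_filter_right A fun _ _ hz ↦ hz.trans hab.le
  · exact mem_filter.2 ⟨hb, le_rfl⟩
  · exact fun hba ↦ hab.not_ge (mem_filter.1 hba).2

theorem rankIn_le_rankIn_add_card_Ioc [LocallyFiniteOrder α] (A : Finset α) (a b : α) :
    rankIn A b ≤ rankIn A a + #(Ioc a b) := by
  have hsub : {z ∈ A | z ≤ b} ⊆ {z ∈ A | z ≤ a} ∪ Ioc a b := by
    intro z hz
    simp only [mem_union, mem_filter, mem_Ioc] at hz ⊢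
    exact (le_or_gt z a).imp (⟨hz.1, ·⟩) (⟨·, hz.2⟩)
  exact (card_le_card hsub).trans (card_union_le _ _)

theorem abs_rankIn_sub_rankIn_le (A : Finset ℤ) (a b : ℤ) :
    |(rankIn A a : ℤ) - rankIn A b| ≤ |a - b| := by
  wlog hab : a ≤ b generalizing a b
  · simpa only [abs_sub_comm] using this b a (le_of_not_ge hab)
  have hmono : rankIn A a ≤ rankIn A b := rankIn_monotone A hab
  have hgrowth : rankIn A b ≤ rankIn A a + (b - a).toNat := by
    simpa only [Int.card_Ioc] using rankIn_le_rankIn_add_card_Ioc A a b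
  rw [abs_le, abs_of_nonpos (sub_nonpos.2 hab)]
  lia

end Rank

section CoordRank

variable {ι α : Type*} [LinearOrder α]

/-- Coordinatewise compression relative to `S`: the `i`-th coordinate of `x` is replaced by its
rank among the `i`-th coordinates of the points of `S`. The ranks are taken in `ℤ`, so that for
`α = ℤ` this is a self-map of the lattice. -/
def coordRank (S : Finset (ι → α)) (x : ι → α) (i : ι) : ℤ :=
  rankIn (S.image (· i)) (x i)

theorem coordRank_injOn (S : Finset (ι → α)) : Set.InjOn (coordRank S) S := by
  intro x hx y hy hxy
  funext i
  have hrank : rankIn (S.image (· i)) (x i) = rankIn (S.image (· i)) (y i) :=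
    Int.ofNat_inj.1 (congrFun hxy i)
  refine (rankIn_strictMonoOn (S.image (· i))).injOn ?_ ?_ hrank
  · exact mem_image_of_mem (· i) hx
  · exact mem_image_of_mem (· i) hy

theorem one_le_coordRank {S : Finset (ι → α)} {x : ι → α} (hx : x ∈ S) (i : ι) :
    1 ≤ coordRank S x i :=
  Int.ofNat_le.2 (rankIn_pos (mem_image_of_mem (· i) hx))

theorem coordRank_le_card (S : Finset (ι → α)) (x : ι → α) (i : ι) : coordRank S x i ≤ #S :=
  Int.ofNat_le.2 ((rankIn_le_card _ _).trans card_image_le)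

end CoordRank

theorem zdist_le_zdist_of_abs_sub_le {d : ℕ} {x y x' y' : Fin d → ℤ}
    (h : ∀ i, |x i - y i| ≤ |x' i - y' i|) : zdist x y ≤ zdist x' y' :=
  Real.sqrt_le_sqrt (sum_le_sum fun i _ ↦ sq_le_sq.2 (mod_cast h i))

theorem zdist_coordRank_le {d : ℕ} (S : Finset (Fin d → ℤ)) (x y : Fin d → ℤ) :
    zdist (coordRank S x) (coordRank S y) ≤ zdist x y :=
  zdist_le_zdist_of_abs_sub_le fun i ↦ abs_rankIn_sub_rankIn_le _ (x i) (y i)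

theorem stmt_12_general {d : ℕ} (S : Finset (Fin d → ℤ)) :
    ∃ f : (Fin d → ℤ) → (Fin d → ℤ),
      Set.InjOn f S ∧
      (∀ x ∈ S, ∀ i, 1 ≤ f x i ∧ f x i ≤ #S) ∧
      (∀ x y, zdist (f x) (f y) ≤ zdist x y) :=
  ⟨coordRank S, coordRank_injOn S,
    fun x hx i ↦ ⟨one_le_coordRank hx i, coordRank_le_card S x i⟩, zdist_coordRank_le S⟩

/-- Any `n^d`-element subset of `ℤ^d` admits a `1`-Lipschitz (for the Euclidean metric)
injection into the cubic grid `{1,…,n^d}^d`. -/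
theorem stmt_12 (d n : ℕ) (hd : 1 ≤ d) (hn : 1 ≤ n)
    (S : Finset (Fin d → ℤ)) (hS : S.card = n ^ d) :
    ∃ f : (Fin d → ℤ) → (Fin d → ℤ),
      Set.InjOn f ↑S ∧
      (∀ x ∈ S, ∀ i, 1 ≤ f x i ∧ f x i ≤ ((n ^ d : ℕ) : ℤ)) ∧
      (∀ x ∈ S, ∀ y ∈ S, zdist (f x) (f y) ≤ zdist x y) := by
  obtain ⟨f, hinj, hgrid, hlip⟩ := stmt_12_general S
  exact ⟨f, hinj, hS ▸ hgrid, fun x _ y _ ↦ hlip x y⟩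
end
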